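/- arXiv:2206.01177 — 6 statements merged into one kernel-verified Lean document; each statement's English description precedes it below -/
import Mathlib

section
/- Let T be a measure-preserving transformation of a probability space (X, ℬ, μ) and let M ⊆ ℕ be an infinite syndetic set. If T is mixing on M, then T is strongly mixing. -/
open MeasureTheory Filter Set

/-- A measure-preserving transformation `T` is mixing on a set `M ⊆ ℕ` if
`μ(T^{-m} A ∩ B) → μ(A)μ(B)` as `m → ∞` along `m ∈ M`. -/
def MixingOnMap {X : Type*} [MeasurableSpace X] (μ : Measure X) (T : X → X)
    (M : Set ℕ) : Prop :=
  ∀ A B : Set X, MeasurableSet A → MeasurableSet B →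
    Tendsto (fun m : ℕ => μ (T^[m] ⁻¹' A ∩ B)) (atTop ⊓ 𝓟 M) (nhds (μ A * μ B))

/-- `M ⊆ ℕ` is syndetic: gaps between consecutive elements are bounded, i.e. every
interval of `d` consecutive naturals meets `M` for some fixed `d > 0`. -/
def SyndeticNat (M : Set ℕ) : Prop :=
  ∃ d : ℕ, 0 < d ∧ ∀ n : ℕ, ∃ m ∈ M, n ≤ m ∧ m < n + d

/-!
By invariance of `μ`, `μ(T⁻ⁿA ∩ B) = μ(T⁻⁽ⁿ⁺ᵏ⁾A ∩ T⁻ᵏB)`, so mixing on `M`, applied to `A` and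
`T⁻ᵏB`, gives mixing on the translate `M - k`. Finitely many translates of a syndetic set cover
`ℕ`, and mixing passes to finite unions.
-/

theorem SyndeticNat.exists_finite_biUnion_preimage_add_eq_univ {M : Set ℕ} (hM : SyndeticNat M) :
    ∃ K : Set ℕ, K.Finite ∧ ⋃ k ∈ K, (· + k) ⁻¹' M = univ := by
  obtain ⟨d, -, hd⟩ := hM
  refine ⟨Iio d, finite_Iio d, eq_univ_of_forall fun n => ?_⟩
  obtain ⟨m, hmM, hnm, hmd⟩ := hd n
  obtain ⟨k, rfl⟩ := Nat.exists_eq_add_of_le hnm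
  exact mem_biUnion (Nat.add_lt_add_iff_left.mp hmd) hmM

section Mixing

variable {X : Type*} [MeasurableSpace X] {μ : Measure X} {T : X → X}

theorem measure_preimage_iterate_add_inter (hT : MeasurePreserving T μ μ) {A B : Set X}
    (hA : MeasurableSet A) (hB : MeasurableSet B) (n k : ℕ) :
    μ (T^[n + k] ⁻¹' A ∩ T^[k] ⁻¹' B) = μ (T^[n] ⁻¹' A ∩ B) := by
  have hAB : MeasurableSet (T^[n] ⁻¹' A ∩ B) := ((hT.iterate n).measurable hA).inter hB
  rw [Function.iterate_add, preimage_comp, ← preimage_inter,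
    (hT.iterate k).measure_preimage hAB.nullMeasurableSet]

namespace MixingOnMap

variable {M N : Set ℕ}

theorem mono (hM : MixingOnMap μ T M) (hNM : N ⊆ M) : MixingOnMap μ T N :=
  fun A B hA hB => (hM A B hA hB).mono_left (inf_le_inf_left _ (principal_mono.mpr hNM))

theorem biUnion {ι : Type*} {K : Set ι} (hK : K.Finite) {M : ι → Set ℕ}
    (hM : ∀ i ∈ K, MixingOnMap μ T (M i)) : MixingOnMap μ T (⋃ i ∈ K, M i) := by
  intro A B hA hB U hU
  have hU_each : ∀ i ∈ K, ∀ᶠ m in atTop, m ∈ M i → μ (T^[m] ⁻¹' A ∩ B) ∈ U :=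
    fun i hi => eventually_inf_principal.mp (hM i hi A B hA hB hU)
  refine eventually_inf_principal.mpr ?_
  filter_upwards [(eventually_all_finite hK).mpr hU_each] with m hm hmM
  obtain ⟨i, hi, hmi⟩ := mem_iUnion₂.mp hmM
  exact hm i hi hmi

theorem preimage_add (hM : MixingOnMap μ T M) (hT : MeasurePreserving T μ μ) (k : ℕ) :
    MixingOnMap μ T ((· + k) ⁻¹' M) := by
  intro A B hA hB
  have hTk : MeasurePreserving T^[k] μ μ := hT.iterate k
  have hshift : Tendsto (· + k) (atTop ⊓ 𝓟 ((· + k) ⁻¹' M)) (atTop ⊓ 𝓟 M) :=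
    (tendsto_add_atTop_nat k).inf (tendsto_principal_principal.mpr fun _ hn => hn)
  have hlim := (hM A (T^[k] ⁻¹' B) hA (hTk.measurable hB)).comp hshift
  rw [hTk.measure_preimage hB.nullMeasurableSet] at hlim
  exact hlim.congr fun n => measure_preimage_iterate_add_inter hT hA hB n k

end MixingOnMap

theorem strongMixing_of_mixingOn_syndetic_general {M N K : Set ℕ}
    (hT : MeasurePreserving T μ μ) (hmix : MixingOnMap μ T M) (hK : K.Finite)
    (hN : N ⊆ ⋃ k ∈ K, (· + k) ⁻¹' M) : MixingOnMap μ T N :=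
  (MixingOnMap.biUnion hK fun k _ => hmix.preimage_add hT k).mono hN

end Mixing

/-- If a measure-preserving transformation of a probability space is mixing
on an infinite syndetic set, then it is strongly mixing. -/
theorem strongMixing_of_mixingOn_syndetic {X : Type*} [MeasurableSpace X]
    (μ : Measure X) [IsProbabilityMeasure μ] (T : X → X)
    (hT : MeasurePreserving T μ μ) (M : Set ℕ) (hMinf : M.Infinite)
    (hMsyn : SyndeticNat M) (hmix : MixingOnMap μ T M) :
    MixingOnMap μ T Set.univ := by
  obtain ⟨K, hK, hcover⟩ := hMsyn.exists_finite_biUnion_preimage_add_eq_univ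
  exact strongMixing_of_mixingOn_syndetic_general hT hmix hK hcover.ge
end

section
/- For each positive integer n, there exists an n-thick subset of ℕ that is not (n+1)-thick. -/
/-!
Fix a base `b ≥ 2` and let `K` consist of the naturals whose `⌊log_b m⌋` is even. Multiplication by
`b` raises this logarithm by exactly one, so `K` never contains both `m` and `b * m` for `m > 0`,
and `K` is not `b`-thick. Yet `K` contains the interval `[b ^ e, b ^ (e + 1))` for every even `e`,
and for `r < b` and large `e` this interval has room for `k, 2 * k, …, r * k` with margin `ℓ`, where
`k = b ^ e + ℓ`.
-/

open Set

/-- `K ⊆ ℕ` is `r`-thick: for each `ℓ` there is `k` with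
`{j⬝k + i : 1 ≤ j ≤ r, -ℓ ≤ i ≤ ℓ} ⊆ K`. -/
def RThickNat (r : ℕ) (K : Set ℕ) : Prop :=
  ∀ ℓ : ℕ, ∃ k : ℕ, ∀ j : ℕ, 1 ≤ j → j ≤ r → ∀ i : ℤ, -(ℓ : ℤ) ≤ i → i ≤ (ℓ : ℤ) →
    ∃ m : ℕ, (m : ℤ) = (j : ℤ) * (k : ℤ) + i ∧ m ∈ K

theorem rThickNat_of_forall_exists_Icc_subset {r : ℕ} {K : Set ℕ}
    (h : ∀ ℓ, ∃ a, Icc a (r * (a + ℓ) + ℓ) ⊆ K) : RThickNat r K := by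
  intro ℓ
  obtain ⟨a, ha⟩ := h ℓ
  refine ⟨a + ℓ, fun j hj hjr i hi hiℓ ↦ ?_⟩
  have lower : (a + ℓ : ℤ) ≤ j * (a + ℓ) := by exact_mod_cast Nat.le_mul_of_pos_left _ hj
  have upper : (j * (a + ℓ) : ℤ) ≤ r * (a + ℓ) := by gcongr
  obtain ⟨m, hm⟩ : ∃ m : ℕ, j * (a + ℓ) + i = (m : ℤ) := Int.eq_ofNat_of_zero_le (by linarith)
  exact ⟨m, by rw [← hm, Nat.cast_add], ha ⟨by zify; linarith, by zify; linarith⟩⟩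

theorem RThickNat.exists_pos_mem_mul_mem {r : ℕ} {K : Set ℕ} (hr : 1 ≤ r) (h : RThickNat r K) :
    ∃ k, 0 < k ∧ k ∈ K ∧ r * k ∈ K := by
  -- The margin `ℓ = 1` puts `k - 1` among the natural numbers, which excludes `k = 0`.
  obtain ⟨k, hk⟩ := h 1
  obtain ⟨p, hp, -⟩ := hk 1 le_rfl hr (-1) (by simp) (by simp)
  obtain ⟨m, hm, hmK⟩ := hk 1 le_rfl hr 0 (by simp) (by simp)
  obtain ⟨m', hm', hmK'⟩ := hk r hr le_rfl 0 (by simp) (by simp)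
  obtain rfl : m = k := by simpa using hm
  obtain rfl : m' = r * m := by exact_mod_cast hm'.trans (add_zero _)
  exact ⟨m, by omega, hmK, hmK'⟩

theorem Icc_subset_preimage_log {b r ℓ e : ℕ} {A : Set ℕ} (he : e ∈ A) (hrb : r < b)
    (hℓ : b * ℓ < b ^ e) : Icc (b ^ e) (r * (b ^ e + ℓ) + ℓ) ⊆ Nat.log b ⁻¹' A := by
  rintro m ⟨hem, hme⟩
  have hmb : m < b ^ (e + 1) := calc
    m ≤ r * b ^ e + (r + 1) * ℓ := by linarith
    _ ≤ r * b ^ e + b * ℓ := by gcongr; exact hrb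
    _ < r * b ^ e + b ^ e := by gcongr
    _ = (r + 1) * b ^ e := by ring
    _ ≤ b * b ^ e := by gcongr; exact hrb
    _ = b ^ (e + 1) := (pow_succ' b e).symm
  rwa [mem_preimage, Nat.log_eq_of_pow_le_of_lt_pow hem hmb]

theorem rThickNat_preimage_log {b r : ℕ} {A : Set ℕ} (hb : 1 < b) (hrb : r < b)
    (hA : A.Infinite) : RThickNat r (Nat.log b ⁻¹' A) := by
  refine rThickNat_of_forall_exists_Icc_subset fun ℓ ↦ ?_
  obtain ⟨e, he, hℓe⟩ := hA.exists_gt ℓ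
  refine ⟨b ^ e, Icc_subset_preimage_log he hrb ?_⟩
  calc
    b * ℓ < b * b ^ ℓ := by gcongr; exact Nat.lt_pow_self hb
    _ = b ^ (ℓ + 1) := (pow_succ' b ℓ).symm
    _ ≤ b ^ e := Nat.pow_le_pow_right (by omega) hℓe

theorem not_rThickNat_preimage_log {b : ℕ} {A : Set ℕ} (hb : 1 < b)
    (hA : ∀ e ∈ A, e + 1 ∉ A) : ¬ RThickNat b (Nat.log b ⁻¹' A) := by
  intro h
  obtain ⟨k, hk, hkA, hbkA⟩ := h.exists_pos_mem_mul_mem hb.le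
  rw [mem_preimage, mul_comm, Nat.log_mul_base hb hk.ne'] at hbkA
  exact hA _ hkA hbkA

/-- for every positive integer `n` there is an `n`-thick subset of `ℕ`
that is not `(n+1)`-thick. -/
theorem exists_rThick_not_succ_rThick (n : ℕ) (hn : 1 ≤ n) :
    ∃ K : Set ℕ, RThickNat n K ∧ ¬ RThickNat (n + 1) K := by
  have hb : 1 < n + 1 := by omega
  have even_infinite : {e : ℕ | Even e}.Infinite :=
    infinite_of_forall_exists_gt fun e ↦ ⟨2 * (e + 1), even_two_mul _, by omega⟩
  have not_even_succ : ∀ e ∈ {e : ℕ | Even e}, e + 1 ∉ {e : ℕ | Even e} :=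
    fun _ he ↦ Nat.not_even_iff_odd.2 he.add_one
  exact ⟨Nat.log (n + 1) ⁻¹' {e | Even e}, rThickNat_preimage_log hb n.lt_succ_self even_infinite,
    not_rThickNat_preimage_log hb not_even_succ⟩
end

section
/- For each positive integer r, the set K = ⋃_{n=1}^{∞} ([(r+1)^{(r+1)n}, (r+1)^{(r+1)n+1} − 1] ∩ ℕ) is r-thick and has the property that if k ∈ K then (r+1)k ∉ K. In particular, for r = 1, the set K = ⋃_{n=1}^{∞} ([2^{2n}, 2^{2n+1} − 1] ∩ ℕ) is thick and satisfies: k ∈ K implies 2k ∉ K. -/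
open Set

/-!
Between `N` and `(r + 1) N` there is room for windows around `k, 2k, …, rk` with `k` slightly larger
than `N`, so a set containing `[N, (r + 1) N)` for arbitrarily large `N` is `r`-thick. On the other
hand, the base-`(r + 1)` logarithm of every element of `K` has integer part divisible by `r + 1`,
and multiplication by `r + 1` raises this integer part by exactly one.
-/

/-- The union over `n ≥ 1` of the intervals `[b ^ (d n), b ^ (d n + 1) - 1]`: for `b ≥ 2`, the
positive integers whose base-`b` logarithm has integer part `d n` for some `n ≥ 1`. The base `b` and
the period `d` are kept independent; the theorem concerns the case `b = d = r + 1`. -/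
def powerIntervals (b d : ℕ) : Set ℕ :=
  {m : ℕ | ∃ n : ℕ, 1 ≤ n ∧ b ^ (d * n) ≤ m ∧ m ≤ b ^ (d * n + 1) - 1}

section Thickness

variable {r b d n : ℕ} {K : Set ℕ}

theorem rThickNat_of_frequently_Ico_subset
    (hK : ∃ᶠ N in Filter.atTop, Ico N ((r + 1) * N) ⊆ K) : RThickNat r K := by
  intro ℓ
  obtain ⟨N, hN, hsub⟩ := Filter.frequently_atTop'.1 hK ((r + 1) * ℓ)
  -- Shifting `N` by `ℓ` keeps the window around `k` above `N`; `(r + 1) * ℓ < N` keeps the window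
  -- around `r * k` below `(r + 1) * N`.
  refine ⟨N + ℓ, fun j hj hjr i hi hiℓ => ?_⟩
  have lower : ((N + ℓ : ℕ) : ℤ) ≤ j * (N + ℓ : ℕ) :=
    mod_cast Nat.le_mul_of_pos_left _ hj
  have upper : (j : ℤ) * (N + ℓ : ℕ) ≤ r * (N + ℓ : ℕ) :=
    mod_cast Nat.mul_le_mul_right _ hjr
  obtain ⟨m, hm⟩ := Int.eq_ofNat_of_zero_le (a := j * (N + ℓ : ℕ) + i) (by lia)
  refine ⟨m, hm.symm, hsub ⟨by lia, ?_⟩⟩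
  zify at hN ⊢
  push_cast at hm upper
  linarith

theorem Ico_subset_powerIntervals (hn : 1 ≤ n) :
    Ico (b ^ (d * n)) (b ^ (d * n + 1)) ⊆ powerIntervals b d :=
  fun _ hm => ⟨n, hn, hm.1, Nat.le_sub_one_of_lt hm.2⟩

theorem rThickNat_powerIntervals (hb : 1 < b) (hd : 0 < d) (hrb : r < b) :
    RThickNat r (powerIntervals b d) := by
  have tendsto_pow : Filter.Tendsto (fun n => b ^ (d * n)) Filter.atTop Filter.atTop :=
    (tendsto_pow_atTop_atTop_of_one_lt hb).comp (Filter.tendsto_id.const_mul_atTop' hd)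
  refine rThickNat_of_frequently_Ico_subset (tendsto_pow.frequently ?_)
  refine ((Filter.eventually_ge_atTop 1).mono fun n hn => ?_).frequently
  have endpoint_le : (r + 1) * b ^ (d * n) ≤ b ^ (d * n + 1) := by
    rw [pow_succ']
    exact Nat.mul_le_mul_right _ hrb
  exact (Ico_subset_Ico_right endpoint_le).trans (Ico_subset_powerIntervals hn)

end Thickness

section Multiplication

variable {b d k : ℕ}

theorem pos_of_mem_powerIntervals (hb : 0 < b) (hk : k ∈ powerIntervals b d) : 0 < k := by
  obtain ⟨n, -, hle, -⟩ := hk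
  exact (Nat.pow_pos hb).trans_le hle

theorem dvd_log_of_mem_powerIntervals (hb : 0 < b) (hk : k ∈ powerIntervals b d) :
    d ∣ Nat.log b k := by
  obtain ⟨n, -, hle, hle_sub⟩ := hk
  exact ⟨n, Nat.log_eq_of_pow_le_of_lt_pow hle (Nat.lt_of_le_pred (Nat.pow_pos hb) hle_sub)⟩

theorem mul_notMem_powerIntervals (hb : 1 < b) (hd : d ≠ 1) (hk : k ∈ powerIntervals b d) :
    b * k ∉ powerIntervals b d := by
  intro hbk
  have hb₀ : 0 < b := Nat.zero_lt_of_lt hb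
  have log_mul : Nat.log b (b * k) = Nat.log b k + 1 := by
    rw [mul_comm, Nat.log_mul_base hb (pos_of_mem_powerIntervals hb₀ hk).ne']
  have dvd_succ : d ∣ Nat.log b k + 1 := log_mul ▸ dvd_log_of_mem_powerIntervals hb₀ hbk
  exact hd (Nat.dvd_one.1 ((Nat.dvd_add_right (dvd_log_of_mem_powerIntervals hb₀ hk)).1 dvd_succ))

end Multiplication

/-- for each positive integer `r`, the set
`K = ⋃_{n≥1} [(r+1)^{(r+1)n}, (r+1)^{(r+1)n+1} - 1]` is `r`-thick and `k ∈ K` implies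
`(r+1)k ∉ K`; in particular, for `r = 1`, `K = ⋃_{n≥1} [2^{2n}, 2^{2n+1} - 1]` is thick
and `k ∈ K` implies `2k ∉ K`. -/
theorem rThick_powerIntervals_and_doubling :
    (∀ r : ℕ, 1 ≤ r →
      RThickNat r {m : ℕ | ∃ n : ℕ, 1 ≤ n ∧
          (r + 1) ^ ((r + 1) * n) ≤ m ∧ m ≤ (r + 1) ^ ((r + 1) * n + 1) - 1} ∧
      ∀ k ∈ {m : ℕ | ∃ n : ℕ, 1 ≤ n ∧
          (r + 1) ^ ((r + 1) * n) ≤ m ∧ m ≤ (r + 1) ^ ((r + 1) * n + 1) - 1},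
        (r + 1) * k ∉ {m : ℕ | ∃ n : ℕ, 1 ≤ n ∧
          (r + 1) ^ ((r + 1) * n) ≤ m ∧ m ≤ (r + 1) ^ ((r + 1) * n + 1) - 1}) ∧
    (RThickNat 1 {m : ℕ | ∃ n : ℕ, 1 ≤ n ∧ 2 ^ (2 * n) ≤ m ∧ m ≤ 2 ^ (2 * n + 1) - 1} ∧
      ∀ k ∈ {m : ℕ | ∃ n : ℕ, 1 ≤ n ∧ 2 ^ (2 * n) ≤ m ∧ m ≤ 2 ^ (2 * n + 1) - 1},
        2 * k ∉ {m : ℕ | ∃ n : ℕ, 1 ≤ n ∧ 2 ^ (2 * n) ≤ m ∧ m ≤ 2 ^ (2 * n + 1) - 1}) := by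
  refine ⟨fun r hr => ?_, ?_⟩
  · have hb : 1 < r + 1 := Nat.lt_succ_of_le hr
    exact ⟨rThickNat_powerIntervals hb r.succ_pos r.lt_succ_self,
      fun _ hk => mul_notMem_powerIntervals hb hb.ne' hk⟩
  · exact ⟨rThickNat_powerIntervals one_lt_two two_pos one_lt_two,
      fun _ hk => mul_notMem_powerIntervals one_lt_two one_lt_two.ne' hk⟩
end

section
/- If M ⊆ ℕ has density zero, then for every positive integer r the complement ℕ ∖ M contains an r-thick set. -/
/-!
For fixed `r` and `ℓ`, if every set `{j * k + i : 1 ≤ j ≤ r, -ℓ ≤ i ≤ ℓ}` with `k ≥ ℓ` met `M`, then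
every such `k` would lie in one of finitely many preimages of `M` under injective affine maps. The
preimage of `M` under `k ↦ a * k + b` has at most as many elements in `{1, …, n}` as `M` has in
`{1, …, a * n + b}`, so `M` would contain at least a fixed positive proportion of `{1, …, N}` for
all large `N`. Hence it is enough that this proportion is small for arbitrarily large `N`.
-/

open Filter Set

/-- `M ⊆ ℕ` has density zero: `|M ∩ {1,…,N}| / N → 0`. -/
def DensityZero (M : Set ℕ) : Prop :=
  Tendsto (fun N : ℕ => ((M ∩ Set.Icc 1 N).ncard : ℝ) / N) atTop (nhds 0)

/-- `M ⊆ ℕ` has lower density zero, i.e. the limit inferior of `|M ∩ {1,…,N}| / N` is zero. Since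
these ratios are nonnegative, this says exactly that `0` is one of their cluster points. -/
def LowerDensityZero (M : Set ℕ) : Prop :=
  MapClusterPt (0 : ℝ) atTop fun N : ℕ => ((M ∩ Set.Icc 1 N).ncard : ℝ) / N

section

variable {M : Set ℕ}

theorem DensityZero.lowerDensityZero (h : DensityZero M) : LowerDensityZero M :=
  Tendsto.mapClusterPt h

theorem ncard_preimage_affine_inter_Icc_le (M : Set ℕ) {a : ℕ} (ha : 0 < a) (b n : ℕ) :
    ({k | a * k + b ∈ M} ∩ Icc 1 n).ncard ≤ (M ∩ Icc 1 (a * n + b)).ncard := by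
  refine ncard_le_ncard_of_injOn (fun k => a * k + b) ?_ ?_ ((finite_Icc _ _).inter_of_right M)
  · rintro k ⟨hkM, hk, hkn⟩
    exact ⟨hkM, by nlinarith, by gcongr⟩
  · intro k _ l _ hkl
    exact Nat.eq_of_mul_eq_mul_left ha (Nat.add_right_cancel hkl)

namespace LowerDensityZero

theorem frequently_mul_ncard_lt (h : LowerDensityZero M) (C : ℕ) :
    ∃ᶠ N : ℕ in atTop, C * (M ∩ Icc 1 N).ncard < N := by
  have hratio : ∃ᶠ N : ℕ in atTop, ((M ∩ Icc 1 N).ncard : ℝ) / N < 1 / (C + 1) :=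
    h.frequently (Iio_mem_nhds (by positivity))
  refine (hratio.and_eventually (eventually_gt_atTop 0)).mono fun N ⟨hN, hNpos⟩ => ?_
  rw [div_lt_div_iff₀ (by exact_mod_cast hNpos) (by positivity), one_mul] at hN
  have hlt : (M ∩ Icc 1 N).ncard * (C + 1) < N := by exact_mod_cast hN
  linarith

theorem exists_mul_ncard_Icc_affine_lt (h : LowerDensityZero M) (C a b : ℕ) :
    ∃ n, C * (M ∩ Icc 1 (a * n + b)).ncard < n := by
  obtain ⟨N, hcount, hN⟩ := ((h.frequently_mul_ncard_lt (2 * (a + 1) * C)).and_eventually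
    (eventually_ge_atTop (2 * (a + 1 + b)))).exists
  obtain ⟨n, hn_le, hn_gt⟩ : ∃ n, (a + 1) * n ≤ N - b ∧ N - b < (a + 1) * (n + 1) :=
    ⟨(N - b) / (a + 1), Nat.mul_div_le _ _, Nat.lt_mul_div_succ _ a.succ_pos⟩
  have hmono : (M ∩ Icc 1 (a * n + b)).ncard ≤ (M ∩ Icc 1 N).ncard := by
    have hle : a * n + b ≤ N := by
      rw [add_one_mul] at hn_le
      omega
    exact ncard_le_ncard (by gcongr) ((finite_Icc _ _).inter_of_right M)
  refine ⟨n, Nat.lt_of_mul_lt_mul_left (a := 2 * (a + 1)) ?_⟩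
  calc 2 * (a + 1) * (C * (M ∩ Icc 1 (a * n + b)).ncard)
      ≤ 2 * (a + 1) * C * (M ∩ Icc 1 N).ncard := by rw [← mul_assoc]; gcongr
    _ < N := hcount
    _ ≤ 2 * (a + 1) * n := by
      rw [mul_add_one] at hn_gt
      rw [mul_assoc]
      omega

theorem exists_forall_affine_notMem (h : LowerDensityZero M) (F : Finset (ℕ × ℕ))
    (hF : ∀ p ∈ F, 0 < p.1) : ∃ k, ∀ p ∈ F, p.1 * k + p.2 ∉ M := by
  obtain ⟨n, hn⟩ := h.exists_mul_ncard_Icc_affine_lt F.card (F.sup Prod.fst) (F.sup Prod.snd)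
  by_contra! hmeets
  have hcover : Icc 1 n ⊆ ⋃ p ∈ F, {k | p.1 * k + p.2 ∈ M} ∩ Icc 1 n := fun k hk => by
    simpa only [mem_iUnion, exists_prop] using
      (hmeets k).imp fun p hp => ⟨hp.1, hp.2, hk⟩
  have hpiece : ∀ p ∈ F, ({k | p.1 * k + p.2 ∈ M} ∩ Icc 1 n).ncard ≤
      (M ∩ Icc 1 (F.sup Prod.fst * n + F.sup Prod.snd)).ncard := fun p hp => by
    refine (ncard_preimage_affine_inter_Icc_le M (hF p hp) p.2 n).trans
      (ncard_le_ncard ?_ ((finite_Icc _ _).inter_of_right M))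
    gcongr
    exacts [Finset.le_sup (f := Prod.fst) hp, Finset.le_sup (f := Prod.snd) hp]
  refine hn.not_ge ?_
  calc n = (Icc 1 n).ncard := by simp
    _ ≤ (⋃ p ∈ F, {k | p.1 * k + p.2 ∈ M} ∩ Icc 1 n).ncard :=
      ncard_le_ncard hcover (F.finite_toSet.biUnion fun _ _ => (finite_Icc 1 n).inter_of_right _)
    _ ≤ ∑ p ∈ F, ({k | p.1 * k + p.2 ∈ M} ∩ Icc 1 n).ncard := Finset.set_ncard_biUnion_le F _
    _ ≤ F.card * (M ∩ Icc 1 (F.sup Prod.fst * n + F.sup Prod.snd)).ncard :=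
      Finset.sum_le_card_nsmul F _ _ hpiece

end LowerDensityZero

theorem compl_contains_rThick_of_densityZero_general (h : LowerDensityZero M) (r : ℕ) :
    RThickNat r Mᶜ := by
  intro ℓ
  -- Shifting `k` by `ℓ` turns the offsets `i ∈ [-ℓ, ℓ]` into natural numbers `j * ℓ + i`.
  obtain ⟨k, hk⟩ := h.exists_forall_affine_notMem
    (Finset.Icc 1 r ×ˢ Finset.Icc 0 ((r + 1) * ℓ))
    fun p hp => (Finset.mem_Icc.1 (Finset.mem_product.1 hp).1).1
  refine ⟨k + ℓ, fun j hj hjr i hi hiℓ => ?_⟩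
  have hoffset_nonneg : 0 ≤ (j : ℤ) * ℓ + i := by nlinarith
  obtain ⟨b, hb⟩ := Int.eq_ofNat_of_zero_le hoffset_nonneg
  have hb_le : b ≤ (r + 1) * ℓ := by
    zify at hjr ⊢
    nlinarith
  refine ⟨j * k + b, ?_, hk (j, b) ?_⟩
  · push_cast
    linarith
  · exact Finset.mem_product.2 ⟨Finset.mem_Icc.2 ⟨hj, hjr⟩, Finset.mem_Icc.2 ⟨b.zero_le, hb_le⟩⟩

end

/-- if `M ⊆ ℕ` has density zero, then for every positive integer `r` the
complement of `M` contains an `r`-thick set. -/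
theorem compl_contains_rThick_of_densityZero
    (M : Set ℕ) (hd : DensityZero M) (r : ℕ) (hr : 1 ≤ r) :
    ∃ K : Set ℕ, K ⊆ Mᶜ ∧ RThickNat r K :=
  ⟨Mᶜ, subset_rfl, compl_contains_rThick_of_densityZero_general hd.lowerDensityZero r⟩
end

section
/- Let T be an invertible measure-preserving transformation of a standard probability space (X, ℬ, μ) and let (s_n) be a sequence of positive integers. Assume: (1) for every irrational real number α, the sequence of fractional parts {s_n α} is dense in [0, 1); (2) T is totally ergodic; (3) there is a constant K > 1 such that for all measurable sets A, B, limsup_{n→∞} μ(T^{s_n} A ∩ B) ≤ K μ(A) μ(B). Then T is mixing along (s_n), i.e., μ(T^{s_n} A ∩ B) → μ(A)μ(B) as n → ∞ for all measurable A, B. -/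
open MeasureTheory Filter Set
open scoped Topology NNReal ENNReal InnerProductSpace InnerProduct

/-!
Let `U` be the Koopman isometry of `L²(μ)` and let `P` be a weak operator limit of `U ^ s n` along
an ultrafilter; mixing means that every such `P` is the projection onto the constants. The bound
`K` gives `‖P f‖_∞ ≤ K ‖f‖₂`, so `P` is Hilbert–Schmidt, hence compact, and it commutes with `U`.
If `Q f = P f - ⟪1, f⟫ P 1` were nonzero, the eigenspace of `Q† Q` for its top eigenvalue would be
finite-dimensional and invariant under `U`, and so would contain an eigenvector of `U` orthogonal
to the constants. By total ergodicity its eigenvalue is not a root of unity, so its powers along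
`s n` return arbitrarily close to `1`. Every neighbourhood `O` of a nonzero point in the support of
the law `ν` of the eigenfunction then satisfies `ν O ≤ K (ν O)²`, whence `ν` has an atom off `0`,
which Poincaré recurrence makes periodic under the rotation by the eigenvalue: a contradiction.
-/

theorem mapClusterPt_atTop_of_mem_closure_range {Y : Type*} [TopologicalSpace Y] [T1Space Y]
    {u : ℕ → Y} {y : Y} (hy : y ∈ closure (range u)) (hne : ∀ n, u n ≠ y) :
    MapClusterPt y atTop u := by
  refine mapClusterPt_iff_frequently.2 fun O hO => frequently_atTop.2 fun N => ?_
  have hfin : (u '' Iio N).Finite := (finite_Iio N).image u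
  have hmem : O \ u '' Iio N ∈ 𝓝 y :=
    inter_mem hO (hfin.isClosed.isOpen_compl.mem_nhds fun ⟨n, _, hn⟩ => hne n hn)
  obtain ⟨_, ⟨hO', hN⟩, n, rfl⟩ := mem_closure_iff_nhds.1 hy _ hmem
  exact ⟨n, not_lt.1 fun hn => hN ⟨n, hn, rfl⟩, hO'⟩

theorem nsmul_coe_unitAddCircle_ne_zero {α : ℝ} (hα : Irrational α) {n : ℕ} (hn : n ≠ 0) :
    n • (α : UnitAddCircle) ≠ 0 := by
  rw [← AddCircle.coe_nsmul, nsmul_eq_mul, Ne, AddCircle.coe_eq_zero_iff]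
  rintro ⟨m, hm⟩
  exact (hα.natCast_mul hn).ne_int m (by simpa using hm.symm)

theorem norm_nsmul_coe_unitAddCircle_le_fract (α : ℝ) (n : ℕ) :
    ‖n • (α : UnitAddCircle)‖ ≤ Int.fract (n * α) :=
  calc ‖n • (α : UnitAddCircle)‖ = ‖((Int.fract (n * α) : ℝ) : UnitAddCircle)‖ := by
        rw [← AddCircle.coe_nsmul, nsmul_eq_mul, AddCircle.coe_fract]
    _ ≤ ‖Int.fract (n * α)‖ := QuotientAddGroup.norm_mk_le_norm
    _ = Int.fract (n * α) := by rw [Real.norm_eq_abs, Int.abs_fract]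

theorem mapClusterPt_zero_nsmul_coe_unitAddCircle {α : ℝ} (hα : Irrational α) {s : ℕ → ℕ}
    (hs : ∀ n, s n ≠ 0) (h : ∀ ε > 0, ∃ n, Int.fract (s n * α) < ε) :
    MapClusterPt 0 atTop fun n => s n • (α : UnitAddCircle) := by
  refine mapClusterPt_atTop_of_mem_closure_range
    (Metric.mem_closure_range_iff.2 fun ε hε => ?_) fun n =>
      nsmul_coe_unitAddCircle_ne_zero hα (hs n)
  obtain ⟨n, hn⟩ := h ε hε
  refine ⟨n, ?_⟩
  rw [dist_zero_left]
  exact (norm_nsmul_coe_unitAddCircle_le_fract α (s n)).trans_lt hn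

theorem mapClusterPt_one_circle_pow {s : ℕ → ℕ}
    (hs : ∀ α : ℝ, Irrational α → MapClusterPt 0 atTop fun n => s n • (α : UnitAddCircle))
    {c : Circle} (hc : ∀ q : ℕ, q ≠ 0 → c ^ q ≠ 1) : MapClusterPt 1 atTop fun n => c ^ s n := by
  obtain ⟨θ, rfl⟩ := (AddCircle.homeomorphCircle one_ne_zero).surjective c
  obtain ⟨α, rfl⟩ := QuotientAddGroup.mk_surjective θ
  simp only [AddCircle.homeomorphCircle_apply, ← AddCircle.toCircle_nsmul] at hc ⊢
  have hα : Irrational α := by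
    rintro ⟨q, rfl⟩
    refine hc q.den q.den_nz ?_
    have hq : q.den • ((q : ℝ) : UnitAddCircle) = 0 := by
      rw [← AddCircle.coe_nsmul, nsmul_eq_mul, AddCircle.coe_eq_zero_iff]
      refine ⟨q.num, ?_⟩
      rw [zsmul_one]
      exact_mod_cast (Rat.den_mul_eq_num q).symm
    rw [hq, AddCircle.toCircle_zero]
  simpa [Function.comp_def] using
    (hs α hα).continuousAt_comp (AddCircle.continuous_toCircle (T := 1)).continuousAt

section HilbertSchmidt

variable {𝕜 E F : Type*} [RCLike 𝕜] [NormedAddCommGroup E] [InnerProductSpace 𝕜 E]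
  [NormedAddCommGroup F] [InnerProductSpace 𝕜 F]

/-- Hilbert–Schmidt operators, with square-summability tested on finite orthonormal families so
that no orthonormal basis has to be chosen. -/
def IsHilbertSchmidt (Q : E →L[𝕜] F) : Prop :=
  ∃ C : ℝ, ∀ (n : ℕ) (e : Fin n → E), Orthonormal 𝕜 e → ∑ i, ‖Q (e i)‖ ^ 2 ≤ C

-- Take a family for which `∑ i, ‖Q (e i)‖ ^ 2` is within `ε ^ 2` of its supremum: a unit vector
-- orthogonal to it can be added to the family.
theorem IsHilbertSchmidt.exists_finiteDimensional_norm_le {Q : E →L[𝕜] F}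
    (hQ : IsHilbertSchmidt Q) {ε : ℝ} (hε : 0 < ε) :
    ∃ V : Submodule 𝕜 E, FiniteDimensional 𝕜 V ∧ ∀ w ∈ Vᗮ, ‖Q w‖ ≤ ε * ‖w‖ := by
  obtain ⟨C, hC⟩ := hQ
  let S : Set ℝ := {t | ∃ (n : ℕ) (e : Fin n → E), Orthonormal 𝕜 e ∧ ∑ i, ‖Q (e i)‖ ^ 2 = t}
  have hbdd : BddAbove S := ⟨C, by rintro _ ⟨n, e, he, rfl⟩; exact hC n e he⟩
  have hne : S.Nonempty := ⟨_, 0, Fin.elim0, ⟨fun i => i.elim0, fun i => i.elim0⟩, rfl⟩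
  obtain ⟨_, ⟨n, e, he, rfl⟩, hlt⟩ :=
    exists_lt_of_lt_csSup hne (sub_lt_self (sSup S) (pow_pos hε 2))
  have hunit : ∀ u ∈ (Submodule.span 𝕜 (range e))ᗮ, ‖u‖ = 1 → ‖Q u‖ ≤ ε := by
    intro u hu hu1
    have hortho : Orthonormal 𝕜 (Matrix.vecCons u e) := orthonormal_vecCons_iff.2 ⟨hu1, fun i =>
      Submodule.inner_left_of_mem_orthogonal (Submodule.subset_span (mem_range_self i)) hu, he⟩
    have hle := le_csSup hbdd ⟨n + 1, _, hortho, rfl⟩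
    simp only [Fin.sum_univ_succ, Matrix.cons_val_zero, Matrix.cons_val_succ] at hle
    exact (sq_le_sq₀ (norm_nonneg _) hε.le).1 (by linarith)
  refine ⟨Submodule.span 𝕜 (range e), .span_of_finite 𝕜 (finite_range e), fun w hw => ?_⟩
  rcases eq_or_ne w 0 with rfl | hw0
  · simp
  have hnormalized := hunit _ (Submodule.smul_mem _ (‖w‖⁻¹ : 𝕜) hw) (norm_smul_inv_norm hw0)
  rw [map_smul, norm_smul, norm_inv, RCLike.norm_coe_norm,
    inv_mul_le_iff₀ (norm_pos_iff.2 hw0)] at hnormalized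
  rwa [mul_comm]

theorem IsHilbertSchmidt.isCompactOperator [CompleteSpace F] {Q : E →L[𝕜] F}
    (hQ : IsHilbertSchmidt Q) : IsCompactOperator Q := by
  refine isClosed_setOfPred_isCompactOperator.closure_subset
    (Metric.mem_closure_iff.2 fun ε hε => ?_)
  obtain ⟨V, hV, hVε⟩ := hQ.exists_finiteDimensional_norm_le (half_pos hε)
  have hcompact : IsCompactOperator (Q ∘L V.subtypeL) :=
    have := FiniteDimensional.proper_rclike 𝕜 V
    isCompactOperator_of_locallyCompactSpace_rng (Q ∘L V.subtypeL)
  refine ⟨Q ∘L V.starProjection, hcompact.comp_clm V.orthogonalProjectionOnto, ?_⟩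
  rw [dist_eq_norm]
  refine (ContinuousLinearMap.opNorm_le_bound _ (half_pos hε).le fun f => ?_).trans_lt
    (half_lt_self hε)
  calc ‖(Q - Q ∘L V.starProjection) f‖ = ‖Q (Vᗮ.starProjection f)‖ := by
        simp [Submodule.starProjection_orthogonal_val]
    _ ≤ ε / 2 * ‖Vᗮ.starProjection f‖ := hVε _ (Submodule.starProjection_apply_mem _ _)
    _ ≤ ε / 2 * ‖f‖ := by
        gcongr
        exact Submodule.norm_starProjection_apply_le _ _

end HilbertSchmidt

section NormAttaining

variable {𝕜 E F : Type*} [RCLike 𝕜] [NormedAddCommGroup E] [InnerProductSpace 𝕜 E] [CompleteSpace E]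
  [NormedAddCommGroup F] [InnerProductSpace 𝕜 F] [CompleteSpace F]

theorem adjoint_comp_self_apply_eq_smul_iff (Q : E →L[𝕜] F) (f : E) :
    (Q† ∘L Q) f = ((‖Q‖ ^ 2 : ℝ) : 𝕜) • f ↔ ‖Q f‖ = ‖Q‖ * ‖f‖ := by
  have hinner : RCLike.re ⟪(Q† ∘L Q) f, f⟫_𝕜 = ‖Q f‖ ^ 2 :=
    (Q.apply_norm_sq_eq_inner_adjoint_left f).symm
  refine ⟨fun h => ?_, fun h => ?_⟩
  · rw [← sq_eq_sq₀ (norm_nonneg _) (by positivity), ← hinner, h, inner_smul_left,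
      RCLike.conj_ofReal, RCLike.re_ofReal_mul, inner_self_eq_norm_sq, mul_pow]
  · have hnorm : ‖(Q† ∘L Q) f‖ ≤ ‖Q‖ ^ 2 * ‖f‖ :=
      calc ‖(Q†) (Q f)‖ ≤ ‖Q†‖ * ‖Q f‖ := (Q†).le_opNorm _
        _ = ‖Q‖ ^ 2 * ‖f‖ := by rw [LinearIsometryEquiv.norm_map, h]; ring
    rw [← sub_eq_zero, ← norm_eq_zero, ← sq_eq_zero_iff]
    refine le_antisymm ?_ (sq_nonneg _)
    calc ‖(Q† ∘L Q) f - ((‖Q‖ ^ 2 : ℝ) : 𝕜) • f‖ ^ 2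
        = ‖(Q† ∘L Q) f‖ ^ 2 - 2 * (‖Q‖ ^ 2 * ‖Q f‖ ^ 2) + (‖Q‖ ^ 2 * ‖f‖) ^ 2 := by
          rw [norm_sub_sq (𝕜 := 𝕜), inner_smul_right, RCLike.re_ofReal_mul, hinner, norm_smul,
            RCLike.norm_ofReal, abs_of_nonneg (by positivity)]
      _ ≤ (‖Q‖ ^ 2 * ‖f‖) ^ 2 - 2 * (‖Q‖ ^ 2 * ‖Q f‖ ^ 2) + (‖Q‖ ^ 2 * ‖f‖) ^ 2 := by gcongr
      _ = 0 := by rw [h]; ring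

theorem exists_hasEigenvalue_norm_eq_opNorm {S : E →L[𝕜] E} (hS : IsCompactOperator S)
    (hSa : IsSelfAdjoint S) (hS0 : S ≠ 0) :
    ∃ z, Module.End.HasEigenvalue (S : Module.End 𝕜 E) z ∧ ‖z‖ = ‖S‖ := by
  have hradius : spectralRadius 𝕜 S = ‖S‖₊ := S.spectralRadius_eq_nnnorm hSa
  have hne : (spectrum 𝕜 S).Nonempty := by
    by_contra hempty
    simp only [spectralRadius, not_nonempty_iff_eq_empty.1 hempty, mem_empty_iff_false, iSup_false,
      iSup_bot] at hradius
    exact hS0 (nnnorm_eq_zero.1 (ENNReal.coe_eq_zero.1 hradius.symm))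
  obtain ⟨z, hz, hzS⟩ := spectrum.exists_nnnorm_eq_spectralRadius_of_nonempty hne
  have hnorm : ‖z‖ = ‖S‖ := congrArg NNReal.toReal (ENNReal.coe_injective (hzS.trans hradius))
  have hz0 : z ≠ 0 := norm_ne_zero_iff.1 (hnorm ▸ norm_ne_zero_iff.2 hS0)
  exact ⟨z, (hS.hasEigenvalue_iff_mem_spectrum hz0).2 hz, hnorm⟩

theorem exists_ne_zero_norm_apply_eq_opNorm_mul {Q : E →L[𝕜] F} (hQ : IsCompactOperator Q)
    (hQ0 : Q ≠ 0) : ∃ f ≠ 0, ‖Q f‖ = ‖Q‖ * ‖f‖ := by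
  have hnorm : ‖Q† ∘L Q‖ = ‖Q‖ * ‖Q‖ := Q.norm_adjoint_comp_self
  obtain ⟨z, hz, hzQ⟩ :=
    exists_hasEigenvalue_norm_eq_opNorm (hQ.clm_comp (Q†))
      Q.isPositive_adjoint_comp_self.isSelfAdjoint
      (ContinuousLinearMap.adjoint_comp_self_eq_zero_iff.not.2 hQ0)
  obtain ⟨f, hf⟩ := hz.exists_hasEigenvector
  refine ⟨f, hf.2, (sq_eq_sq₀ (norm_nonneg _) (by positivity)).1 ?_⟩
  calc ‖Q f‖ ^ 2 = ‖⟪(Q† ∘L Q) f, f⟫_𝕜‖ := by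
        simp [ContinuousLinearMap.adjoint_inner_left]
    _ = ‖Q‖ * ‖Q‖ * ‖f‖ ^ 2 := by
        rw [show (Q† ∘L Q) f = z • f from hf.apply_eq_smul, inner_smul_left, norm_mul,
          RCLike.norm_conj, hzQ, hnorm, inner_self_eq_norm_sq_to_K, norm_pow,
          RCLike.norm_ofReal, abs_norm]
    _ = (‖Q‖ * ‖f‖) ^ 2 := by ring

end NormAttaining

section Isometry

variable {E F : Type*} [NormedAddCommGroup E] [InnerProductSpace ℂ E] [CompleteSpace E]
  [NormedAddCommGroup F] [InnerProductSpace ℂ F] [CompleteSpace F]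

theorem exists_eigenvector_norm_apply_eq_opNorm_mul {Q : E →L[ℂ] F} (hQ : IsCompactOperator Q)
    (hQ0 : Q ≠ 0) (U : E →ₗᵢ[ℂ] E) (hQU : ∀ f, ‖Q (U f)‖ = ‖Q f‖) :
    ∃ f ≠ 0, (∃ c : ℂ, U f = c • f) ∧ ‖Q f‖ = ‖Q‖ * ‖f‖ := by
  let V := Module.End.eigenspace ((Q† ∘L Q : E →L[ℂ] E) : Module.End ℂ E) ((‖Q‖ ^ 2 : ℝ) : ℂ)
  have hV : ∀ f, f ∈ V ↔ ‖Q f‖ = ‖Q‖ * ‖f‖ := fun f =>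
    Module.End.mem_eigenspace_iff.trans (adjoint_comp_self_apply_eq_smul_iff Q f)
  have : FiniteDimensional ℂ V :=
    ContinuousLinearMap.finite_dimensional_eigenspace (hQ.clm_comp (Q†)) _ (by simpa using hQ0)
  have : Nontrivial V := by
    obtain ⟨f, hf0, hf⟩ := exists_ne_zero_norm_apply_eq_opNorm_mul hQ hQ0
    exact (Submodule.nontrivial_iff_ne_bot).2 ((Submodule.ne_bot_iff _).2 ⟨f, (hV f).2 hf, hf0⟩)
  have hUV : ∀ f ∈ V, U.toLinearMap f ∈ V := fun f hf => by
    rw [hV] at hf ⊢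
    rw [LinearIsometry.coe_toLinearMap, hQU, hf, U.norm_map]
  obtain ⟨c, hc⟩ := Module.End.exists_eigenvalue (U.toLinearMap.restrict hUV)
  obtain ⟨⟨f, hfV⟩, hf⟩ := hc.exists_hasEigenvector
  exact ⟨f, fun h => hf.2 (Subtype.ext h), ⟨c, congrArg Subtype.val hf.apply_eq_smul⟩, (hV f).1 hfV⟩

theorem apply_eq_inner_smul_of_eigenvectors_mem_span {U : E →ₗᵢ[ℂ] E} {e : E} (he : ‖e‖ = 1)
    (hUe : U e = e) (hU : ∀ (c : ℂ) (f : E), U f = c • f → f ∈ Submodule.span ℂ {e})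
    {P : E →L[ℂ] F} (hP : IsCompactOperator P) (hPU : ∀ f, ‖P (U f)‖ = ‖P f‖) (f : E) :
    P f = ⟪e, f⟫_ℂ • P e := by
  let Q : E →L[ℂ] F := P ∘L (.id ℂ E - InnerProductSpace.rankOne ℂ e e)
  have hQ : ∀ g, Q g = P (g - ⟪e, g⟫_ℂ • e) := fun g => by simp [Q]
  have hQe : Q e = 0 := by simp [hQ, inner_self_eq_norm_sq_to_K, he]
  have hQU : ∀ g, ‖Q (U g)‖ = ‖Q g‖ := fun g => by
    have hcomm : U g - ⟪e, U g⟫_ℂ • e = U (g - ⟪e, g⟫_ℂ • e) := by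
      rw [map_sub, map_smul, hUe]
      nth_rw 1 [← hUe]
      rw [U.inner_map_map]
    rw [hQ, hQ, hcomm, hPU]
  have hQ0 : Q = 0 := by
    by_contra hQ0
    obtain ⟨g, hg0, ⟨c, hc⟩, hg⟩ :=
      exists_eigenvector_norm_apply_eq_opNorm_mul (hP.comp_clm _) hQ0 U hQU
    obtain ⟨a, rfl⟩ := Submodule.mem_span_singleton.1 (hU c g hc)
    rw [map_smul, hQe, smul_zero, norm_zero] at hg
    exact mul_ne_zero (norm_ne_zero_iff.2 hQ0) (norm_ne_zero_iff.2 hg0) hg.symm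
  have hQf := hQ f
  rwa [hQ0, zero_apply, map_sub, map_smul, eq_comm, sub_eq_zero] at hQf

end Isometry

theorem exists_tendsto_of_norm_le_ultrafilter {ι Y : Type*} [NormedAddCommGroup Y] [ProperSpace Y]
    {u : ι → Y} {r : ℝ} (hu : ∀ i, ‖u i‖ ≤ r) (l : Ultrafilter ι) :
    ∃ y, ‖y‖ ≤ r ∧ Tendsto u l (𝓝 y) := by
  obtain ⟨y, hy, hlim⟩ := (isCompact_closedBall (0 : Y) r).ultrafilter_le_nhds (l.map u)
    (le_principal_iff.2 (mem_map.2 (Eventually.of_forall fun i => by simpa using hu i)))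
  exact ⟨y, by simpa using hy, hlim⟩

section WeakOperatorLimit

variable {𝕜 E F ι : Type*} [RCLike 𝕜] [NormedAddCommGroup E] [InnerProductSpace 𝕜 E]
  [NormedAddCommGroup F] [InnerProductSpace 𝕜 F]

theorem exists_tendsto_wot_of_norm_le [CompleteSpace F] {V : ι → E →L[𝕜] F} {C : ℝ}
    (hV : ∀ i, ‖V i‖ ≤ C) (l : Ultrafilter ι) :
    ∃ P : E →L[𝕜] F, Tendsto (fun i => ContinuousLinearMapWOT.ofCLM (V i)) l
      (𝓝 (ContinuousLinearMapWOT.ofCLM P)) := by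
  have hbound : ∀ x y i, ‖⟪V i x, y⟫_𝕜‖ ≤ C * ‖x‖ * ‖y‖ := fun x y i =>
    (norm_inner_le_norm _ _).trans (by gcongr; exact (V i).le_of_opNorm_le (hV i) x)
  choose B hBnorm hB using fun x y => exists_tendsto_of_norm_le_ultrafilter (hbound x y) l
  have hunique : ∀ {x y z}, Tendsto (fun i => ⟪V i x, y⟫_𝕜) l (𝓝 z) → B x y = z :=
    fun h => tendsto_nhds_unique (hB _ _) h
  let L : E →L⋆[𝕜] F →L[𝕜] 𝕜 := LinearMap.mkContinuous₂
    (LinearMap.mk₂'ₛₗ (starRingEnd 𝕜) (RingHom.id 𝕜) B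
      (fun x x' y => hunique (by simpa [inner_add_left] using (hB x y).add (hB x' y)))
      (fun c x y => hunique (by simpa [inner_smul_left] using (hB x y).const_mul (starRingEnd 𝕜 c)))
      (fun x y y' => hunique (by simpa [inner_add_right] using (hB x y).add (hB x y')))
      (fun c x y => hunique (by simpa [inner_smul_right] using (hB x y).const_mul c)))
    C hBnorm
  let P : E →L[𝕜] F :=
    ((InnerProductSpace.toDual 𝕜 F).symm : StrongDual 𝕜 F →L⋆[𝕜] F).comp L
  refine ⟨P, ContinuousLinearMapWOT.tendsto_iff_forall_inner_apply_tendsto.2 fun x y => ?_⟩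
  have hP : ⟪P x, y⟫_𝕜 = B x y := InnerProductSpace.toDual_symm_apply
  simpa [← hP, Function.comp_def] using (RCLike.continuous_conj.tendsto _).comp (hB x y)

theorem comp_eq_comp_of_tendsto_wot [CompleteSpace E] {V : ι → E →L[𝕜] E} {P U : E →L[𝕜] E}
    {l : Filter ι} [NeBot l] (hcomm : ∀ i, V i ∘L U = U ∘L V i)
    (hP : Tendsto (fun i => ContinuousLinearMapWOT.ofCLM (V i)) l
      (𝓝 (ContinuousLinearMapWOT.ofCLM P))) : P ∘L U = U ∘L P := by
  rw [ContinuousLinearMapWOT.tendsto_iff_forall_inner_apply_tendsto] at hP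
  ext x
  refine ext_inner_left 𝕜 fun y => tendsto_nhds_unique (hP (U x) y) ?_
  have h := hP x ((U†) y)
  simp only [ContinuousLinearMap.adjoint_inner_left] at h
  refine h.congr fun i => ?_
  exact congrArg (inner 𝕜 y) (DFunLike.congr_fun (hcomm i) x).symm

end WeakOperatorLimit

section PointwiseBounds

variable {X 𝕜 E H : Type*} [MeasurableSpace X] {μ : Measure X} [RCLike 𝕜]

theorem ae_norm_le_of_forall_ae_re_inner_le [NormedAddCommGroup H] [InnerProductSpace 𝕜 H]
    [TopologicalSpace.SeparableSpace H] {h : X → H} {C : ℝ} (hC : 0 ≤ C)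
    (hle : ∀ c, ∀ᵐ x ∂μ, RCLike.re ⟪c, h x⟫_𝕜 ≤ C * ‖c‖) : ∀ᵐ x ∂μ, ‖h x‖ ≤ C := by
  filter_upwards [ae_all_iff.2 fun n => hle (TopologicalSpace.denseSeq H n)] with x hx
  have hclosed : IsClosed {c | RCLike.re ⟪c, h x⟫_𝕜 ≤ C * ‖c‖} :=
    isClosed_le (by fun_prop) (by fun_prop)
  have hall : RCLike.re ⟪h x, h x⟫_𝕜 ≤ C * ‖h x‖ :=
    (TopologicalSpace.denseRange_denseSeq H).induction_on
      (p := fun c => RCLike.re ⟪c, h x⟫_𝕜 ≤ C * ‖c‖) (h x) hclosed hx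
  rw [inner_self_eq_norm_mul_norm] at hall
  rcases (norm_nonneg (h x)).eq_or_lt' with h0 | h0
  · rwa [h0]
  · exact le_of_mul_le_mul_right hall h0

theorem ae_norm_le_of_forall_norm_setIntegral_le [IsFiniteMeasure μ] {h : X → 𝕜}
    (hh : Integrable h μ) {C : ℝ} (hC : 0 ≤ C)
    (hle : ∀ A, MeasurableSet A → ‖∫ x in A, h x ∂μ‖ ≤ C * μ.real A) : ∀ᵐ x ∂μ, ‖h x‖ ≤ C := by
  refine ae_norm_le_of_forall_ae_re_inner_le (𝕜 := 𝕜) hC fun c => ?_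
  refine ae_le_of_forall_setIntegral_le (hh.const_inner c).re (integrable_const _) fun A hA _ => ?_
  calc ∫ x in A, RCLike.re ⟪c, h x⟫_𝕜 ∂μ = RCLike.re ⟪c, ∫ x in A, h x ∂μ⟫_𝕜 := by
        rw [← integral_inner hh.integrableOn, integral_re (hh.const_inner c).integrableOn]
    _ ≤ ‖c‖ * ‖∫ x in A, h x ∂μ‖ := re_inner_le_norm _ _
    _ ≤ ‖c‖ * (C * μ.real A) := by gcongr; exact hle A hA
    _ = ∫ _ in A, C * ‖c‖ ∂μ := by rw [setIntegral_const, smul_eq_mul]; ring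

theorem norm_sq_eq_integral_norm_sq (f : Lp 𝕜 2 μ) : ‖f‖ ^ 2 = ∫ x, ‖f x‖ ^ 2 ∂μ := by
  rw [← inner_self_eq_norm_sq (𝕜 := 𝕜), L2.inner_def, ← integral_re (L2.integrable_inner f f)]
  simp only [inner_self_eq_norm_sq]

variable [NormedAddCommGroup E] [InnerProductSpace 𝕜 E]

theorem ae_sum_norm_sq_le_of_orthonormal {Q : E →L[𝕜] Lp 𝕜 2 μ} {C : ℝ} (hC : 0 ≤ C)
    (hQ : ∀ f, ∀ᵐ x ∂μ, ‖Q f x‖ ≤ C * ‖f‖) {ι : Type*} [Fintype ι] {e : ι → E}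
    (he : Orthonormal 𝕜 e) : ∀ᵐ x ∂μ, ∑ i, ‖Q (e i) x‖ ^ 2 ≤ C ^ 2 := by
  have hvec : ∀ᵐ x ∂μ, ‖WithLp.toLp 2 fun i => Q (e i) x‖ ≤ C := by
    refine ae_norm_le_of_forall_ae_re_inner_le (𝕜 := 𝕜) hC fun c => ?_
    let f : E := ∑ i, starRingEnd 𝕜 (c i) • e i
    have hf : ‖f‖ = ‖c‖ := by
      rw [← sq_eq_sq₀ (norm_nonneg _) (norm_nonneg _), ← inner_self_eq_norm_sq (𝕜 := 𝕜),
        he.inner_sum, EuclideanSpace.norm_sq_eq, map_sum]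
      simp [RCLike.mul_conj]
    have hQf : Q f =ᵐ[μ] fun x => ⟪c, WithLp.toLp 2 fun i => Q (e i) x⟫_𝕜 := by
      have hsmul := fun i => Lp.coeFn_smul (starRingEnd 𝕜 (c i)) (Q (e i))
      simp only [f, map_sum, map_smul]
      filter_upwards [Lp.coeFn_finsetSum Finset.univ fun i => starRingEnd 𝕜 (c i) • Q (e i),
        ae_all_iff.2 hsmul] with x hsum hx
      rw [hsum, Finset.sum_apply, PiLp.inner_apply]
      simp only [hx, Pi.smul_apply, smul_eq_mul, RCLike.inner_apply, mul_comm]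
    filter_upwards [hQ f, hQf] with x hx hxc
    rw [← hxc, ← hf]
    exact (RCLike.re_le_norm _).trans hx
  filter_upwards [hvec] with x hx
  have hsq := pow_le_pow_left₀ (norm_nonneg _) hx 2
  rwa [EuclideanSpace.norm_sq_eq] at hsq

theorem isHilbertSchmidt_of_ae_norm_le [IsFiniteMeasure μ] {Q : E →L[𝕜] Lp 𝕜 2 μ} {C : ℝ}
    (hC : 0 ≤ C) (hQ : ∀ f, ∀ᵐ x ∂μ, ‖Q f x‖ ≤ C * ‖f‖) : IsHilbertSchmidt Q := by
  refine ⟨C ^ 2 * μ.real univ, fun n e he => ?_⟩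
  have hint : ∀ f : Lp 𝕜 2 μ, Integrable (fun x => ‖f x‖ ^ 2) μ := fun f =>
    (memLp_two_iff_integrable_sq_norm (Lp.aestronglyMeasurable f)).1 (Lp.memLp f)
  calc ∑ i, ‖Q (e i)‖ ^ 2 = ∫ x, ∑ i, ‖Q (e i) x‖ ^ 2 ∂μ := by
        rw [integral_finsetSum _ fun i _ => hint _]
        simp only [norm_sq_eq_integral_norm_sq]
    _ ≤ ∫ _, C ^ 2 ∂μ := integral_mono_ae (integrable_finsetSum _ fun i _ => hint _)
        (integrable_const _) (ae_sum_norm_sq_le_of_orthonormal hC hQ he)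
    _ = C ^ 2 * μ.real univ := by rw [integral_const, smul_eq_mul, mul_comm]

end PointwiseBounds

section IntegralNorm

variable {X : Type*} [MeasurableSpace X] {μ : Measure X} [IsFiniteMeasure μ] {p : ℝ≥0∞}

theorem indicatorConstLp_eq_smul {𝕜 : Type*} [RCLike 𝕜] {B : Set X} (hB : MeasurableSet B)
    (c : 𝕜) : indicatorConstLp p hB (measure_ne_top μ B) c
      = c • indicatorConstLp p hB (measure_ne_top μ B) (1 : 𝕜) := by
  rw [indicatorConstLp, indicatorConstLp, ← MemLp.toLp_const_smul, MemLp.toLp_eq_toLp_iff]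
  exact .of_eq (by ext x; by_cases hx : x ∈ B <;> simp [hx])

theorem integral_norm_indicatorConstLp {G : Type*} [NormedAddCommGroup G] {B : Set X}
    (hB : MeasurableSet B) (c : G) :
    ∫ x, ‖indicatorConstLp p hB (measure_ne_top μ B) c x‖ ∂μ = ‖c‖ * μ.real B := by
  calc ∫ x, ‖indicatorConstLp p hB (measure_ne_top μ B) c x‖ ∂μ
      = ∫ x, B.indicator (fun _ => ‖c‖) x ∂μ := by
        refine integral_congr_ae ?_
        filter_upwards [indicatorConstLp_coeFn (μ := μ) (p := p) (hs := hB)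
          (hμs := measure_ne_top μ B) (c := c)] with x hx
        rw [hx, norm_indicator_eq_indicator_norm]
    _ = ‖c‖ * μ.real B := by rw [integral_indicator_const _ hB, smul_eq_mul, mul_comm]

variable [Fact (1 ≤ p)]

theorem integrable_coeFn_Lp {G : Type*} [NormedAddCommGroup G] (f : Lp G p μ) : Integrable f μ :=
  (Lp.memLp f).integrable Fact.out

theorem integral_norm_add_of_disjoint_support {G : Type*} [NormedAddCommGroup G] {f g : X → G}
    (hf : MemLp f p μ) (hg : MemLp g p μ) (hfg : Disjoint f.support g.support) :
    ∫ x, ‖(hf.toLp f + hg.toLp g) x‖ ∂μ = ∫ x, ‖hf.toLp f x‖ ∂μ + ∫ x, ‖hg.toLp g x‖ ∂μ := by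
  rw [← integral_add (integrable_coeFn_Lp _).norm (integrable_coeFn_Lp _).norm]
  refine integral_congr_ae ?_
  filter_upwards [Lp.coeFn_add (hf.toLp f) (hg.toLp g), hf.coeFn_toLp, hg.coeFn_toLp]
    with x hadd hfx hgx
  rw [hadd, Pi.add_apply, hfx, hgx]
  by_cases hx : f x = 0
  · simp [hx]
  · have hgx : g x = 0 := by simpa using disjoint_left.1 hfg hx
    simp [hgx]

end IntegralNorm

section IntegralNormProbability

variable {X : Type*} [MeasurableSpace X] {μ : Measure X} [IsProbabilityMeasure μ] {p : ℝ≥0∞}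
  [Fact (1 ≤ p)]

theorem integral_norm_le_norm_Lp {G : Type*} [NormedAddCommGroup G] (f : Lp G p μ) :
    ∫ x, ‖f x‖ ∂μ ≤ ‖f‖ := by
  rw [integral_norm_eq_lintegral_enorm (Lp.aestronglyMeasurable f),
    ← eLpNorm_one_eq_lintegral_enorm, Lp.norm_def]
  exact ENNReal.toReal_mono (Lp.eLpNorm_ne_top f)
    (eLpNorm_le_eLpNorm_of_exponent_le Fact.out (Lp.aestronglyMeasurable f))

theorem lipschitzWith_integral_norm_Lp {G : Type*} [NormedAddCommGroup G] :
    LipschitzWith 1 fun f : Lp G p μ => ∫ x, ‖f x‖ ∂μ := by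
  refine LipschitzWith.of_le_add fun f g => ?_
  have hsub : ∫ x, ‖f x‖ ∂μ - ∫ x, ‖g x‖ ∂μ ≤ ∫ x, ‖(f - g) x‖ ∂μ := by
    rw [← integral_sub (integrable_coeFn_Lp f).norm (integrable_coeFn_Lp g).norm]
    refine integral_mono_ae ((integrable_coeFn_Lp f).norm.sub (integrable_coeFn_Lp g).norm)
      (integrable_coeFn_Lp (f - g)).norm ?_
    filter_upwards [Lp.coeFn_sub f g] with x hx
    rw [hx]
    exact norm_sub_norm_le _ _
  rw [dist_eq_norm]
  linarith [integral_norm_le_norm_Lp (f - g)]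

theorem norm_apply_le_mul_integral_norm {𝕜 F : Type*} [RCLike 𝕜] [NormedAddCommGroup F]
    [NormedSpace 𝕜 F] (hp : p ≠ ∞) (L : Lp 𝕜 p μ →L[𝕜] F) {C : ℝ}
    (hL : ∀ {B} (hB : MeasurableSet B),
      ‖L (indicatorConstLp p hB (measure_ne_top μ B) 1)‖ ≤ C * μ.real B) (f : Lp 𝕜 p μ) :
    ‖L f‖ ≤ C * ∫ x, ‖f x‖ ∂μ := by
  refine Lp.induction hp (motive := fun f => ‖L f‖ ≤ C * ∫ x, ‖f x‖ ∂μ) (fun c B hB _ => ?_)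
    (fun f g hf hg hfg hLf hLg => ?_) ?_ f
  · rw [Lp.simpleFunc.coe_indicatorConst, integral_norm_indicatorConstLp,
      indicatorConstLp_eq_smul, map_smul, norm_smul, mul_left_comm]
    gcongr
    exact hL hB
  · rw [map_add, integral_norm_add_of_disjoint_support hf hg hfg, mul_add]
    exact (norm_add_le _ _).trans (add_le_add hLf hLg)
  · exact isClosed_le (by fun_prop) (lipschitzWith_integral_norm_Lp.continuous.const_mul C)

end IntegralNormProbability

section Eigenfunctions

theorem exists_mem_inv_le_measure_singleton {Y : Type*} [TopologicalSpace Y]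
    [SecondCountableTopology Y] [MeasurableSpace Y] {ν : Measure Y} [IsFiniteMeasure ν]
    [ν.OuterRegular] {K : ℝ≥0∞} (hν : ∀ O, IsOpen O → ν O ≤ K * (ν O * ν O)) {S : Set Y}
    (hS : ν S ≠ 0) : ∃ z ∈ S, K⁻¹ ≤ ν {z} := by
  obtain ⟨z, hzS, hz⟩ := exists_mem_forall_mem_nhdsWithin_pos_measure hS
  refine ⟨z, hzS, ?_⟩
  rw [Set.measure_eq_iInf_isOpen]
  refine le_iInf₂ fun O hzO => le_iInf fun hO => ?_
  have hpos : ν O ≠ 0 := (hz O (mem_nhdsWithin_of_mem_nhds (hO.mem_nhds (hzO rfl)))).ne'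
  rw [ENNReal.inv_le_iff_le_mul (fun h => absurd h (measure_ne_top ν O)) (fun _ => hpos),
    ← ENNReal.mul_le_mul_iff_left hpos (measure_ne_top ν O), one_mul, mul_assoc]
  exact hν O hO

theorem mem_periodicPts_of_measure_singleton_ne_zero {Y : Type*} [MeasurableSpace Y]
    [MeasurableSingletonClass Y] {ν : Measure Y} [IsFiniteMeasure ν] {R : Y → Y}
    (hR : MeasurePreserving R ν ν) {z : Y} (hz : ν {z} ≠ 0) : z ∈ Function.periodicPts R := by
  obtain ⟨_, rfl, m, hm, hmz⟩ :=
    hR.conservative.exists_mem_iterate_mem (measurableSet_singleton z).nullMeasurableSet hz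
  exact ⟨m, hm.bot_lt, hmz⟩

variable {X : Type*} [MeasurableSpace X] {μ : Measure X} {T : X → X}

theorem comp_iterate_ae_eq_pow_smul {M Y : Type*} [Monoid M] [MulAction M Y] {f : X → Y} {c : M}
    (hT : Measure.QuasiMeasurePreserving T μ μ) (hf : f ∘ T =ᵐ[μ] c • f) (n : ℕ) :
    f ∘ T^[n] =ᵐ[μ] c ^ n • f := by
  induction n with
  | zero => simp
  | succ n ih =>
    filter_upwards [hT.ae ih, hf] with x hn hx
    simp only [Function.comp_apply, Pi.smul_apply, Function.iterate_succ_apply] at hn hx ⊢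
    rw [hn, hx, smul_smul, pow_succ]

variable {f : X → ℂ} {c : Circle}

theorem measurePreserving_smul_map_of_eigenfunction (hT : MeasurePreserving T μ μ)
    (hf : Measurable f) (hfc : f ∘ T =ᵐ[μ] c • f) :
    MeasurePreserving (c • ·) (μ.map f) (μ.map f) := by
  refine ⟨measurable_const_smul c, ?_⟩
  rw [Measure.map_map (measurable_const_smul c) hf]
  change μ.map (c • f) = μ.map f
  rw [← Measure.map_congr hfc, ← Measure.map_map hf hT.measurable, hT.map_eq]

variable [IsFiniteMeasure μ] {s : ℕ → ℕ}

theorem measure_preimage_le_limsup_of_mapClusterPt (hT : Measure.QuasiMeasurePreserving T μ μ)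
    (hf : Measurable f) (hfc : f ∘ T =ᵐ[μ] c • f) (hc : MapClusterPt 1 atTop fun n => c ^ s n)
    {O : Set ℂ} (hO : IsOpen O) :
    μ (f ⁻¹' O) ≤ limsup (fun n => μ (f ⁻¹' O ∩ T^[s n] ⁻¹' (f ⁻¹' O))) atTop := by
  have hfO : MeasurableSet (f ⁻¹' O) := hf hO.measurableSet
  obtain ⟨φ, hφ, hlim⟩ := hc.tendsto_subseq
  have hconv : Tendsto (fun k => μ (f ⁻¹' O ∩ T^[s (φ k)] ⁻¹' (f ⁻¹' O))) atTop
      (𝓝 (μ (f ⁻¹' O))) := by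
    refine tendsto_measure_of_ae_tendsto_indicator_of_isFiniteMeasure atTop hfO
      (fun k => hfO.inter (hT.measurable.iterate _ hfO)) ?_
    filter_upwards [ae_all_iff.2 (comp_iterate_ae_eq_pow_smul hT hfc)] with x hx
    by_cases hxO : f x ∈ O
    · have hreturn : Tendsto (fun k => f (T^[s (φ k)] x)) atTop (𝓝 (f x)) := by
        simp only [Function.comp_apply, Pi.smul_apply] at hx
        simpa [hx] using hlim.smul_const (f x)
      filter_upwards [hreturn.eventually_mem (hO.mem_nhds hxO)] with k hk
      simp [hxO, hk]
    · exact Eventually.of_forall fun k => by simp [hxO]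
  rw [← hconv.limsup_eq]
  exact limsup_le_limsup_of_le (u := fun n => μ (f ⁻¹' O ∩ T^[s n] ⁻¹' (f ⁻¹' O)))
    hφ.tendsto_atTop

-- If `c` is not a root of unity then `c ^ s n` returns near `1`, which forces the law of `f` to
-- have an atom away from `0`; this atom is periodic under rotation by `c`.
theorem exists_pow_eq_one_of_eigenfunction {K : ℝ≥0} (hT : MeasurePreserving T μ μ)
    (hs : ∀ c : Circle, (∀ q ≠ 0, c ^ q ≠ 1) → MapClusterPt 1 atTop fun n => c ^ s n)
    (hK : ∀ A, MeasurableSet A → limsup (fun n => μ (A ∩ T^[s n] ⁻¹' A)) atTop ≤ K * (μ A * μ A))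
    (hf : Measurable f) (hfc : f ∘ T =ᵐ[μ] c • f) (hf0 : ¬ f =ᵐ[μ] 0) : ∃ q ≠ 0, c ^ q = 1 := by
  by_contra! hroot
  have hopen : ∀ O, IsOpen O → μ.map f O ≤ K * (μ.map f O * μ.map f O) := fun O hO => by
    simp only [Measure.map_apply hf hO.measurableSet]
    exact (measure_preimage_le_limsup_of_mapClusterPt hT.quasiMeasurePreserving hf hfc
      (hs c hroot) hO).trans (hK _ (hf hO.measurableSet))
  have hsupport : μ.map f {0}ᶜ ≠ 0 := by
    rw [Measure.map_apply hf (measurableSet_singleton 0).compl]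
    exact hf0
  obtain ⟨z, hz, hatom⟩ := exists_mem_inv_le_measure_singleton hopen hsupport
  obtain ⟨q, hq, hperiod⟩ := mem_periodicPts_of_measure_singleton_ne_zero
    (measurePreserving_smul_map_of_eigenfunction hT hf hfc)
    ((ENNReal.inv_pos.2 ENNReal.coe_ne_top).trans_le hatom).ne'
  have hfix : (c : ℂ) ^ q * z = z := by
    simpa [Function.IsPeriodicPt, Function.IsFixedPt, smul_iterate, Circle.smul_def]
      using hperiod
  exact hroot q hq.ne' (Circle.ext (by simpa using mul_eq_right₀ hz |>.1 hfix))

end Eigenfunctions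

section Koopman

variable {X : Type*} [MeasurableSpace X] {μ : Measure X}

/-- The indicator function of a measurable set as a vector of the complex Hilbert space `L²(μ)`. -/
noncomputable def indicatorL2 (μ : Measure X) [IsFiniteMeasure μ] {A : Set X}
    (hA : MeasurableSet A) : Lp ℂ 2 μ :=
  indicatorConstLp 2 hA (measure_ne_top μ A) 1

/-- The Koopman operator `f ↦ f ∘ T` of a measure preserving map, as an isometry of the complex
Hilbert space `L²(μ)`. -/
noncomputable def koopman {T : X → X} (hT : MeasurePreserving T μ μ) :
    Lp ℂ 2 μ →ₗᵢ[ℂ] Lp ℂ 2 μ :=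
  Lp.compMeasurePreservingₗᵢ ℂ T hT

variable {T : X → X} (hT : MeasurePreserving T μ μ)

theorem koopman_ae_eq (f : Lp ℂ 2 μ) : koopman hT f =ᵐ[μ] f ∘ T :=
  Lp.coeFn_compMeasurePreserving f hT

theorem koopman_pow (n : ℕ) : koopman hT ^ n = koopman (hT.iterate n) := by
  refine DFunLike.coe_injective ?_
  rw [LinearIsometry.coe_pow]
  exact Lp.compMeasurePreserving_iterate hT n

variable [IsFiniteMeasure μ]

theorem inner_indicatorL2_left {A : Set X} (hA : MeasurableSet A) (f : Lp ℂ 2 μ) :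
    ⟪indicatorL2 μ hA, f⟫_ℂ = ∫ x in A, f x ∂μ :=
  L2.inner_indicatorConstLp_one hA (measure_ne_top μ A) f

theorem inner_indicatorL2_indicatorL2 {A B : Set X} (hA : MeasurableSet A)
    (hB : MeasurableSet B) : ⟪indicatorL2 μ hA, indicatorL2 μ hB⟫_ℂ = μ.real (A ∩ B) :=
  L2.inner_indicatorConstLp_one_indicatorConstLp_one hA hB

theorem koopman_indicatorL2 {B : Set X} (hB : MeasurableSet B) :
    koopman hT (indicatorL2 μ hB) = indicatorL2 μ (hT.measurable hB) :=
  Lp.indicatorConstLp_compMeasurePreserving hB (measure_ne_top μ B) 1 hT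

theorem inner_indicatorL2_koopman_pow {A B : Set X} (hA : MeasurableSet A)
    (hB : MeasurableSet B) (n : ℕ) :
    ⟪indicatorL2 μ hA, (koopman hT ^ n) (indicatorL2 μ hB)⟫_ℂ = μ.real (A ∩ T^[n] ⁻¹' B) := by
  rw [koopman_pow, koopman_indicatorL2, inner_indicatorL2_indicatorL2]

theorem tendsto_measureReal_of_tendsto_wot {s : ℕ → ℕ} {l : Filter ℕ}
    {P : Lp ℂ 2 μ →L[ℂ] Lp ℂ 2 μ}
    (hP : Tendsto
      (fun n => ContinuousLinearMapWOT.ofCLM (koopman hT ^ s n).toContinuousLinearMap) l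
      (𝓝 (ContinuousLinearMapWOT.ofCLM P))) {A B : Set X} (hA : MeasurableSet A)
    (hB : MeasurableSet B) :
    Tendsto (fun n => (μ.real (A ∩ T^[s n] ⁻¹' B) : ℂ)) l
      (𝓝 ⟪indicatorL2 μ hA, P (indicatorL2 μ hB)⟫_ℂ) := by
  simpa [inner_indicatorL2_koopman_pow] using
    ContinuousLinearMapWOT.tendsto_iff_forall_inner_apply_tendsto.1 hP (indicatorL2 μ hB)
      (indicatorL2 μ hA)

theorem norm_le_mul_measureReal_of_tendsto {s : ℕ → ℕ} {K : ℝ≥0} {l : Filter ℕ} [NeBot l]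
    (hl : l ≤ atTop) {A B : Set X} {w : ℂ}
    (hK : limsup (fun n => μ (A ∩ T^[s n] ⁻¹' B)) atTop ≤ K * (μ A * μ B))
    (hw : Tendsto (fun n => (μ.real (A ∩ T^[s n] ⁻¹' B) : ℂ)) l (𝓝 w)) :
    ‖w‖ ≤ K * (μ.real A * μ.real B) := by
  have hlim : Tendsto (fun n => μ (A ∩ T^[s n] ⁻¹' B)) l (𝓝 ‖w‖ₑ) := by
    simpa [← ofReal_norm, Measure.real] using hw.enorm
  have hle : ‖w‖ₑ ≤ K * (μ A * μ B) :=
    hlim.limsup_eq.symm.trans_le ((limsup_le_limsup_of_le hl).trans hK)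
  simpa [Measure.real] using ENNReal.toReal_mono (by finiteness) hle

theorem mem_span_indicatorL2_univ_of_ae_eq_const {f : Lp ℂ 2 μ} {z : ℂ}
    (hf : f =ᵐ[μ] Function.const X z) :
    f ∈ Submodule.span ℂ {indicatorL2 μ MeasurableSet.univ} := by
  refine Submodule.mem_span_singleton.2 ⟨z, Lp.ext ?_⟩
  filter_upwards [hf, Lp.coeFn_smul z (indicatorL2 μ MeasurableSet.univ),
    indicatorConstLp_coeFn (μ := μ) (p := 2) (hs := MeasurableSet.univ)
      (hμs := measure_ne_top μ univ) (c := (1 : ℂ))] with x hx hsmul hone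
  rw [hsmul, hx, Pi.smul_apply, indicatorL2, hone]
  simp

theorem mem_span_indicatorL2_univ_of_koopman_eq_smul {s : ℕ → ℕ} {K : ℝ≥0}
    (hs : ∀ c : Circle, (∀ q ≠ 0, c ^ q ≠ 1) → MapClusterPt 1 atTop fun n => c ^ s n)
    (herg : ∀ n ≠ 0, Ergodic T^[n] μ)
    (hK : ∀ A, MeasurableSet A → limsup (fun n => μ (A ∩ T^[s n] ⁻¹' A)) atTop ≤ K * (μ A * μ A))
    {f : Lp ℂ 2 μ} {c : ℂ} (hf : koopman hT f = c • f) :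
    f ∈ Submodule.span ℂ {indicatorL2 μ MeasurableSet.univ} := by
  rcases eq_or_ne f 0 with rfl | hf0
  · exact Submodule.zero_mem _
  have hc : ‖c‖ = 1 := by
    have hnorm := (koopman hT).norm_map f
    rwa [hf, norm_smul, mul_eq_right₀ (norm_ne_zero_iff.2 hf0)] at hnorm
  obtain ⟨c, rfl⟩ : ∃ u : Circle, (u : ℂ) = c := ⟨⟨c, mem_sphere_zero_iff_norm.2 hc⟩, rfl⟩
  have hfc : f ∘ T =ᵐ[μ] c • (f : X → ℂ) :=
    (koopman_ae_eq hT f).symm.trans (hf ▸ Lp.coeFn_smul (c : ℂ) f)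
  obtain ⟨q, hq, hcq⟩ := exists_pow_eq_one_of_eigenfunction hT hs hK
    (Lp.stronglyMeasurable f).measurable hfc (mt Lp.eq_zero_iff_ae_eq_zero.2 hf0)
  have hinv : f ∘ T^[q] =ᵐ[μ] f :=
    (comp_iterate_ae_eq_pow_smul hT.quasiMeasurePreserving hfc q).trans
      (.of_eq (by rw [hcq]; exact one_smul Circle (f : X → ℂ)))
  obtain ⟨z, hz⟩ :=
    (herg q hq).ae_eq_const_of_ae_eq_comp_ae (Lp.aestronglyMeasurable f) hinv
  exact mem_span_indicatorL2_univ_of_ae_eq_const hz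

end Koopman

section MixingAlong

variable {X : Type*} [MeasurableSpace X] {μ : Measure X} [IsProbabilityMeasure μ]

-- The pairing with `1_A` is a functional of the argument that is bounded on indicators by their
-- `L¹` norm, hence on all of `L²`; varying `A` then gives the pointwise bound.
theorem ae_norm_apply_le_of_norm_inner_indicatorL2_le {K : ℝ≥0}
    {P : Lp ℂ 2 μ →L[ℂ] Lp ℂ 2 μ}
    (hP : ∀ {A B : Set X} (hA : MeasurableSet A) (hB : MeasurableSet B),
      ‖⟪indicatorL2 μ hA, P (indicatorL2 μ hB)⟫_ℂ‖ ≤ K * (μ.real A * μ.real B))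
    (f : Lp ℂ 2 μ) : ∀ᵐ x ∂μ, ‖P f x‖ ≤ K * ‖f‖ := by
  refine ae_norm_le_of_forall_norm_setIntegral_le (integrable_coeFn_Lp (P f)) (by positivity)
    fun A hA => ?_
  have hL1 : ‖⟪indicatorL2 μ hA, P f⟫_ℂ‖ ≤ K * μ.real A * ∫ x, ‖f x‖ ∂μ :=
    norm_apply_le_mul_integral_norm (by norm_num) (innerSL ℂ (indicatorL2 μ hA) ∘L P)
      (fun hB => (hP hA hB).trans_eq (mul_assoc _ _ _).symm) f
  calc ‖∫ x in A, P f x ∂μ‖ = ‖⟪indicatorL2 μ hA, P f⟫_ℂ‖ := by rw [inner_indicatorL2_left]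
    _ ≤ K * μ.real A * ‖f‖ := hL1.trans (by gcongr; exact integral_norm_le_norm_Lp f)
    _ = K * ‖f‖ * μ.real A := by ring

variable {T : X → X} {s : ℕ → ℕ} {K : ℝ≥0} {l : Filter ℕ}

theorem norm_indicatorL2_univ : ‖indicatorL2 μ MeasurableSet.univ‖ = 1 := by
  rw [indicatorL2, norm_indicatorConstLp two_ne_zero ENNReal.ofNat_ne_top]
  simp

theorem apply_eq_inner_smul_of_tendsto_wot (hT : MeasurePreserving T μ μ)
    (hs : ∀ c : Circle, (∀ q ≠ 0, c ^ q ≠ 1) → MapClusterPt 1 atTop fun n => c ^ s n)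
    (herg : ∀ n ≠ 0, Ergodic T^[n] μ)
    (hK : ∀ A B, MeasurableSet A → MeasurableSet B →
      limsup (fun n => μ (A ∩ T^[s n] ⁻¹' B)) atTop ≤ K * (μ A * μ B))
    [NeBot l] (hl : l ≤ atTop) {P : Lp ℂ 2 μ →L[ℂ] Lp ℂ 2 μ}
    (hP : Tendsto
      (fun n => ContinuousLinearMapWOT.ofCLM (koopman hT ^ s n).toContinuousLinearMap) l
      (𝓝 (ContinuousLinearMapWOT.ofCLM P))) (f : Lp ℂ 2 μ) :
    P f = ⟪indicatorL2 μ MeasurableSet.univ, f⟫_ℂ • P (indicatorL2 μ MeasurableSet.univ) := by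
  have hcompact : IsCompactOperator P :=
    (isHilbertSchmidt_of_ae_norm_le K.coe_nonneg (ae_norm_apply_le_of_norm_inner_indicatorL2_le
      fun hA hB => norm_le_mul_measureReal_of_tendsto hl (hK _ _ hA hB)
        (tendsto_measureReal_of_tendsto_wot hT hP hA hB))).isCompactOperator
  have hcomm : P ∘L (koopman hT).toContinuousLinearMap
      = (koopman hT).toContinuousLinearMap ∘L P :=
    comp_eq_comp_of_tendsto_wot (fun n => by
      ext1 f
      exact DFunLike.congr_fun (Commute.pow_self (koopman hT) (s n)) f) hP
  refine apply_eq_inner_smul_of_eigenvectors_mem_span norm_indicatorL2_univ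
    (koopman_indicatorL2 hT MeasurableSet.univ)
    (fun c f hf => mem_span_indicatorL2_univ_of_koopman_eq_smul hT hs herg
      (fun A hA => hK A A hA hA) hf) hcompact (fun f => ?_) f
  rw [← (koopman hT).norm_map (P f)]
  exact congrArg norm (DFunLike.congr_fun hcomm f)

theorem tendsto_measure_inter_preimage_iterate_ultrafilter
    (hs : ∀ c : Circle, (∀ q ≠ 0, c ^ q ≠ 1) → MapClusterPt 1 atTop fun n => c ^ s n)
    (herg : ∀ n ≠ 0, Ergodic T^[n] μ)
    (hK : ∀ A B, MeasurableSet A → MeasurableSet B →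
      limsup (fun n => μ (A ∩ T^[s n] ⁻¹' B)) atTop ≤ K * (μ A * μ B))
    {l : Ultrafilter ℕ} (hl : ↑l ≤ (atTop : Filter ℕ)) {A B : Set X} (hA : MeasurableSet A)
    (hB : MeasurableSet B) :
    Tendsto (fun n => μ (A ∩ T^[s n] ⁻¹' B)) l (𝓝 (μ A * μ B)) := by
  have hT : MeasurePreserving T μ μ := (herg 1 one_ne_zero).toMeasurePreserving
  obtain ⟨P, hP⟩ := exists_tendsto_wot_of_norm_le
    (fun n => (koopman hT ^ s n).norm_toContinuousLinearMap_le) l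
  have hone := apply_eq_inner_smul_of_tendsto_wot hT hs herg hK hl hP
  have hPone : ⟪indicatorL2 μ hA, P (indicatorL2 μ MeasurableSet.univ)⟫_ℂ = μ.real A :=
    tendsto_nhds_unique (tendsto_measureReal_of_tendsto_wot hT hP hA .univ) (by simp)
  have hlim : ⟪indicatorL2 μ hA, P (indicatorL2 μ hB)⟫_ℂ = (μ.real A * μ.real B : ℝ) := by
    rw [hone, inner_smul_right, inner_indicatorL2_indicatorL2, hPone, univ_inter]
    push_cast
    ring
  have hreal := hlim ▸ tendsto_measureReal_of_tendsto_wot hT hP hA hB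
  rw [← ENNReal.tendsto_toReal_iff (fun n => measure_ne_top _ _) (by finiteness),
    ENNReal.toReal_mul]
  exact (Complex.continuous_re.tendsto _).comp hreal

end MixingAlong

theorem measure_image_iterate_inter {X : Type*} [MeasurableSpace X] {μ : Measure X} {T : X ≃ᵐ X}
    (hT : MeasurePreserving T μ μ) (n : ℕ) (A B : Set X) :
    μ (T^[n] '' A ∩ B) = μ (A ∩ T^[n] ⁻¹' B) := by
  have hemb : ∀ n, MeasurableEmbedding T^[n] := fun n => by
    induction n with
    | zero => exact .id
    | succ n ih => exact ih.comp T.measurableEmbedding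
  rw [← image_inter_preimage, ← (hT.iterate n).measure_preimage_emb (hemb n),
    preimage_image_eq _ (hemb n).injective]

theorem mixing_along_of_totallyErgodic_of_limsup_le_general {X : Type*} [MeasurableSpace X]
    (μ : Measure X) [IsProbabilityMeasure μ] (T : X → X) (s : ℕ → ℕ)
    (hs : ∀ α : ℝ, Irrational α → MapClusterPt 0 atTop fun n => s n • (α : UnitAddCircle))
    (herg : ∀ n ≠ 0, Ergodic T^[n] μ) (K : ℝ≥0)
    (hK : ∀ A B, MeasurableSet A → MeasurableSet B →
      limsup (fun n => μ (A ∩ T^[s n] ⁻¹' B)) atTop ≤ K * (μ A * μ B))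
    {A B : Set X} (hA : MeasurableSet A) (hB : MeasurableSet B) :
    Tendsto (fun n => μ (A ∩ T^[s n] ⁻¹' B)) atTop (𝓝 (μ A * μ B)) :=
  (tendsto_iff_ultrafilter _ _ _).2 fun _ hl => tendsto_measure_inter_preimage_iterate_ultrafilter
    (fun _ => mapClusterPt_one_circle_pow hs) herg hK hl hA hB

/-- generalized Ornstein mixing lemma: suppose `T` is an invertible
measure-preserving transformation of a standard probability space, `(s n)` is a sequence
of positive integers such that `{s n ⬝ α}` is dense in `[0,1)` for every irrational `α`,
`T` is totally ergodic, and `limsup μ(T^{s n} A ∩ B) ≤ K μ(A)μ(B)` for some constant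
`K > 1`.  Then `T` is mixing along `(s n)`. -/
theorem mixing_along_of_totallyErgodic_of_limsup_le
    {X : Type*} [MeasurableSpace X] [StandardBorelSpace X]
    (μ : Measure X) [IsProbabilityMeasure μ] (T : X ≃ᵐ X)
    (hT : MeasurePreserving T μ μ) (s : ℕ → ℕ) (hpos : ∀ n, 0 < s n)
    (hdense : ∀ α : ℝ, Irrational α → ∀ x ∈ Set.Ico (0 : ℝ) 1, ∀ ε > 0,
      ∃ n : ℕ, |Int.fract ((s n : ℝ) * α) - x| < ε)
    (herg : ∀ n : ℕ, n ≠ 0 → Ergodic ((⇑T)^[n]) μ ∧ Ergodic ((⇑T.symm)^[n]) μ)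
    (K : ℝ) (hK : 1 < K)
    (hbound : ∀ A B : Set X, MeasurableSet A → MeasurableSet B →
      Filter.limsup (fun n : ℕ => μ ((⇑T)^[s n] '' A ∩ B)) atTop ≤
        ENNReal.ofReal K * (μ A * μ B)) :
    ∀ A B : Set X, MeasurableSet A → MeasurableSet B →
      Tendsto (fun n : ℕ => μ ((⇑T)^[s n] '' A ∩ B)) atTop (nhds (μ A * μ B)) := by
  intro A B hA hB
  simp only [measure_image_iterate_inter hT] at hbound ⊢
  refine mixing_along_of_totallyErgodic_of_limsup_le_general μ T s (fun α hα => ?_)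
    (fun n hn => (herg n hn).1) K.toNNReal hbound hA hB
  refine mapClusterPt_zero_nsmul_coe_unitAddCircle hα (fun n => (hpos n).ne') fun ε hε => ?_
  obtain ⟨n, hn⟩ := hdense α hα 0 (by simp) ε hε
  exact ⟨n, (le_abs_self _).trans_lt (by simpa using hn)⟩
end

section
/- Let k ≥ 1 be an integer and let T be an invertible measure-preserving transformation of a standard probability space (X, ℬ, μ). Assume T is totally ergodic and there is a constant K > 1 such that for all measurable sets A, B, limsup_{n→∞} μ(T^{n^k} A ∩ B) ≤ K μ(A) μ(B). Then T is mixing along the sequence (n^k), i.e., μ(T^{n^k} A ∩ B) → μ(A)μ(B) as n → ∞ for all measurable A, B. -/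
open MeasureTheory Filter Set
open scoped ENNReal NNReal Topology Nat

/-!
Let `E` be invariant under `T × T`. Its sections satisfy `T⁻¹(E_{Tx}) = E_x`, so `x ↦ 1_{E_x}` is a
factor map from `X` to an isometry of `L¹(μ)`. A factor measure of an isometric system gives all
balls along an orbit in its support the same mass, so such orbits are totally bounded, and then they
return near their starting point along the times `n ^ k`: by van der Waerden's theorem the orbit
points at the times `c m ^ k` are close to each other for `m` in some progression of step `a`, so
their `k`-th difference `c k! a ^ k`, a `k`-th power for suitable `c`, is a near-return time.
By the bound `K` on correlations along `n ^ k`, a ball centred in the support then has mass at least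
`1 / K`. Hence the factor has an atom, which total ergodicity forces to be everything; so `E_x` does
not depend on `x`, and `T × T` is ergodic.

The graph joinings `(id × T^{n^k})_* μ` are invariant under `T × T` and asymptotically at most
`K μ × μ` on rectangles. The ergodic averages of `1_{A × B}` converge to `μ(A) μ(B)` in
`L¹(μ × μ)`, and at each finite time they are constant on the cells of a finite partition into
rectangles. Hence their `L¹` distance to `μ(A) μ(B)` is also small for the graph joinings, which by
invariance give `A × B` mass close to `μ(A) μ(B)`.
-/

theorem map_fwdDiff_iter_le {M G : Type*} [AddCommMonoid M] [AddCommGroup G]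
    (ρ : AddGroupSeminorm G) (f : M → G) (h : M) {δ : ℝ} {n : ℕ} {y : M}
    (hf : ∀ j ≤ n, ρ (f (y + j • h)) ≤ δ) : ρ ((fwdDiff h)^[n] f y) ≤ 2 ^ n * δ := by
  induction n generalizing y with
  | zero => simpa using hf 0 le_rfl
  | succ n ih =>
    have shifted : ρ ((fwdDiff h)^[n] f (y + h)) ≤ 2 ^ n * δ :=
      ih fun j hj ↦ by simpa [succ_nsmul', add_assoc] using hf (j + 1) (by lia)
    have unshifted : ρ ((fwdDiff h)^[n] f y) ≤ 2 ^ n * δ := ih fun j hj ↦ hf j (by lia)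
    calc ρ ((fwdDiff h)^[n + 1] f y)
        = ρ ((fwdDiff h)^[n] f (y + h) - (fwdDiff h)^[n] f y) := by
          rw [Function.iterate_succ_apply', fwdDiff]
      _ ≤ ρ ((fwdDiff h)^[n] f (y + h)) + ρ ((fwdDiff h)^[n] f y) := map_sub_le_add ρ _ _
      _ ≤ 2 ^ (n + 1) * δ := by rw [pow_succ]; linarith

theorem fwdDiff_iter_pow_self {R : Type*} [CommRing R] (h y : R) (n : ℕ) :
    (fwdDiff h)^[n] (fun x : R ↦ x ^ n) y = n ! * h ^ n := by
  have rescale : (fwdDiff h)^[n] (fun x : R ↦ x ^ n) y =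
      (fwdDiff 1)^[n] (fun x : R ↦ (x * h + y) ^ n) 0 := by
    simp only [fwdDiff_iter_eq_sum_shift, nsmul_eq_mul, mul_one, zero_add, add_comm y]
  have expand : (fun x : R ↦ (x * h + y) ^ n) =
      ∑ j ∈ Finset.range (n + 1), (h ^ j * y ^ (n - j) * n.choose j) • fun x : R ↦ x ^ j := by
    ext x
    simp only [add_pow, mul_pow, Finset.sum_apply, Pi.smul_apply, smul_eq_mul]
    exact Finset.sum_congr rfl fun j _ ↦ by ring
  rw [rescale, expand, fwdDiff_iter_finsetSum, Finset.sum_range_succ,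
    Finset.sum_eq_zero fun j hj ↦ by
      rw [fwdDiff_iter_const_smul, fwdDiff_iter_pow_eq_zero_of_lt (Finset.mem_range.1 hj),
        smul_zero]]
  simp [fwdDiff_iter_const_smul, fwdDiff_iter_eq_factorial, mul_comm]

/-- A seminorm `ρ` on `ℤ` is precompact if the naturals (hence, by symmetry, the integers) are
totally bounded for the translation-invariant pseudometric `ρ (a - b)`; such `ρ` define the Bohr
topology of `ℤ`. -/
def IsPrecompactSeminorm (ρ : AddGroupSeminorm ℤ) : Prop :=
  ∀ ε > 0, ∃ F : Set ℤ, F.Finite ∧ ∀ n : ℕ, ∃ m ∈ F, ρ (n - m) < ε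

/-- A sequence is Bohr recurrent if it visits every Bohr neighbourhood of `0` infinitely often. -/
def IsBohrRecurrent (s : ℕ → ℕ) : Prop :=
  ∀ ρ : AddGroupSeminorm ℤ, IsPrecompactSeminorm ρ → ∀ ε > 0, ∃ᶠ n in atTop, ρ (s n) < ε

theorem IsPrecompactSeminorm.exists_map_mul_pow_lt {ρ : AddGroupSeminorm ℤ}
    (hρ : IsPrecompactSeminorm ρ) {k : ℕ} (hk : k ≠ 0) (c : ℕ) {ε : ℝ} (hε : 0 < ε) :
    ∃ a : ℕ, 0 < a ∧ ρ (c * k ! * a ^ k) < ε := by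
  obtain ⟨F, F_finite, hF⟩ := hρ (ε / 2 ^ (k + 1)) (by positivity)
  have := F_finite.to_subtype
  choose center center_mem hcenter using fun m : ℕ ↦ hF (c * m ^ k)
  obtain ⟨a, ha, b, d, hd⟩ := Combinatorics.exists_mono_homothetic_copy
    (Finset.range (k + 1)) fun m ↦ (⟨center m, center_mem m⟩ : F)
  refine ⟨a, ha, ?_⟩
  let f : ℤ → ℤ := fun m ↦ c * m ^ k - d
  have small : ∀ j ≤ k, ρ (f (b + j • (a : ℤ))) ≤ ε / 2 ^ (k + 1) := fun j hj ↦ by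
    have hj' : center (a * j + b) = d :=
      congrArg Subtype.val (hd j (Finset.mem_range.2 (Nat.lt_succ_of_le hj)))
    simpa [f, ← hj', add_comm, mul_comm] using (hcenter (a * j + b)).le
  have difference : (fwdDiff (a : ℤ))^[k] f b = c * k ! * a ^ k := by
    obtain ⟨l, rfl⟩ := Nat.exists_eq_succ_of_ne_zero hk
    have : fwdDiff (a : ℤ) f = fwdDiff (a : ℤ) ((c : ℤ) • fun m : ℤ ↦ m ^ (l + 1)) := by
      ext m
      simp [f, fwdDiff]
    rw [Function.iterate_succ_apply, this, ← Function.iterate_succ_apply, fwdDiff_iter_const_smul,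
      Pi.smul_apply, fwdDiff_iter_pow_self, smul_eq_mul, mul_assoc]
  calc ρ (c * k ! * a ^ k) ≤ 2 ^ k * (ε / 2 ^ (k + 1)) :=
        difference ▸ map_fwdDiff_iter_le ρ f _ small
    _ < ε := by rw [pow_succ]; field_simp; linarith

theorem isBohrRecurrent_pow {k : ℕ} (hk : k ≠ 0) : IsBohrRecurrent fun n ↦ n ^ k := by
  intro ρ hρ ε hε
  refine frequently_atTop.2 fun N ↦ ?_
  obtain ⟨a, ha, hlt⟩ :=
    hρ.exists_map_mul_pow_lt hk ((N + 1) ^ k * k ! ^ (k - 1)) hε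
  refine ⟨(N + 1) * k ! * a, ?_, ?_⟩
  · nlinarith [Nat.mul_pos k.factorial_pos ha]
  · convert hlt using 2
    push_cast
    rw [mul_pow, mul_pow, ← mul_pow_sub_one hk (k ! : ℤ)]
    ring

theorem totallyBounded_of_forall_le_measure_ball {M : Type*} [PseudoMetricSpace M]
    [MeasurableSpace M] [OpensMeasurableSpace M] (μ : Measure M) [IsFiniteMeasure μ] {s : Set M}
    (h : ∀ ε > 0, ∃ m > 0, ∀ x ∈ s, m ≤ μ (Metric.ball x ε)) : TotallyBounded s := by
  refine Metric.totallyBounded_iff.2 fun ε hε ↦ ?_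
  obtain ⟨m, hm, le_ball⟩ := h (ε / 2) (half_pos hε)
  by_contra! uncovered
  have : Std.Symm fun x y : M ↦ ε ≤ dist x y := ⟨fun x y hxy ↦ by rwa [dist_comm]⟩
  obtain ⟨u, hu, separated⟩ := exists_seq_of_forall_finset_exists' (· ∈ s)
    (fun x y : M ↦ ε ≤ dist x y) fun t _ ↦ by
      obtain ⟨y, hys, hy⟩ := not_subset.1 (uncovered t t.finite_toSet)
      simp only [mem_iUnion, not_exists, Metric.mem_ball, not_lt] at hy
      exact ⟨y, hys, fun x hx ↦ dist_comm x y ▸ hy x hx⟩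
  have disjoint_balls : Pairwise (Function.onFun Disjoint fun n ↦ Metric.ball (u n) (ε / 2)) :=
    fun i j hij ↦ Metric.ball_disjoint_ball ((add_halves ε).trans_le (separated hij))
  have := Measure.finite_const_le_meas_of_disjoint_iUnion μ hm
    (fun _ ↦ Metric.isOpen_ball.measurableSet) disjoint_balls (measure_ne_top _ _)
  exact infinite_univ (this.subset fun n _ ↦ le_ball (u n) (hu n))

theorem exists_forall_measure_preimage_ball_ne_zero {X M : Type*}
    [MeasurableSpace X] [PseudoMetricSpace M] {μ : Measure X} [NeZero μ] {Φ : X → M}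
    (hΦ : StronglyMeasurable Φ) : ∃ c, ∀ ε > 0, μ (Φ ⁻¹' Metric.ball c ε) ≠ 0 := by
  borelize M
  have := hΦ.isSeparable_range.secondCountableTopology
  have hΦ' : Measurable (rangeFactorization Φ) := hΦ.measurable.subtype_mk
  have : μ.map (rangeFactorization Φ) ≠ 0 :=
    (Measure.map_ne_zero_iff hΦ'.aemeasurable).2 (NeZero.ne μ)
  obtain ⟨c, hc⟩ := Measure.nonempty_support this
  refine ⟨c, fun ε hε ↦ ?_⟩
  have := (Measure.mem_support_iff_forall c).1 hc _ (Metric.ball_mem_nhds c hε)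
  rw [Measure.map_apply hΦ' Metric.isOpen_ball.measurableSet] at this
  exact this.ne'

section Isometry

variable {M : Type*} [PseudoMetricSpace M] {U : M → M}

theorem isometry_iterate (hU : Isometry U) (n : ℕ) : Isometry U^[n] := by
  induction n with
  | zero => exact isometry_id
  | succ n ih => exact ih.comp hU

theorem dist_iterate_add (hU : Isometry U) (x : M) (p q r : ℕ) :
    dist (U^[p + r] x) (U^[q + r] x) = dist (U^[p] x) (U^[q] x) := by
  simp only [add_comm _ r, Function.iterate_add_apply, (isometry_iterate hU r).dist_eq]

theorem dist_iterate_toNat_sub (hU : Isometry U) (x : M) (p q : ℕ) :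
    dist (U^[(p - q : ℤ).toNat] x) (U^[(-(p - q : ℤ)).toNat] x) = dist (U^[p] x) (U^[q] x) := by
  rcases le_total q p with h | h <;> obtain ⟨r, rfl⟩ := Nat.exists_eq_add_of_le' h
  · simpa using (dist_iterate_add hU x r 0 q).symm
  · simpa using (dist_iterate_add hU x 0 r p).symm

/-- The displacement `n ↦ dist (U^n x) x` of a point under an isometry, as a seminorm on `ℤ`.
As `U` need not be invertible, `U^n x` and `x` are moved forward by the negative part of `n`. -/
def displacement (hU : Isometry U) (x : M) : AddGroupSeminorm ℤ where
  toFun n := dist (U^[n.toNat] x) (U^[(-n).toNat] x)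
  map_zero' := by simp
  neg' n := by rw [neg_neg, dist_comm]
  add_le' m n := by
    have regroup : m + n = ↑(m.toNat + n.toNat) - ↑((-m).toNat + (-n).toNat) := by lia
    rw [regroup, dist_iterate_toNat_sub hU, ← dist_iterate_add hU x m.toNat _ n.toNat,
      ← dist_iterate_add hU x n.toNat _ (-m).toNat, add_comm n.toNat, add_comm (-n).toNat]
    exact dist_triangle _ _ _

theorem displacement_sub (hU : Isometry U) (x : M) (p q : ℕ) :
    displacement hU x (p - q) = dist (U^[p] x) (U^[q] x) :=
  dist_iterate_toNat_sub hU x p q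

theorem displacement_natCast (hU : Isometry U) (x : M) (n : ℕ) :
    displacement hU x n = dist (U^[n] x) x := by
  simpa using displacement_sub hU x n 0

theorem isPrecompactSeminorm_displacement (hU : Isometry U) {x : M}
    (hx : TotallyBounded (range fun n ↦ U^[n] x)) : IsPrecompactSeminorm (displacement hU x) := by
  intro ε hε
  obtain ⟨t, ht, t_finite, t_cover⟩ := Metric.finite_approx_of_totallyBounded hx ε hε
  have := t_finite.to_subtype
  choose index hindex using ht
  refine ⟨range fun y : t ↦ (index y.2 : ℤ), finite_range _, fun n ↦ ?_⟩
  obtain ⟨y, hyt, hy⟩ := mem_iUnion₂.1 (t_cover (mem_range_self n))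
  refine ⟨index hyt, mem_range_self (⟨y, hyt⟩ : t), ?_⟩
  have hindex_y : U^[index hyt] x = y := hindex hyt
  rwa [displacement_sub, hindex_y]

theorem IsBohrRecurrent.frequently_dist_iterate_lt {s : ℕ → ℕ} (hs : IsBohrRecurrent s)
    (hU : Isometry U) {x : M} (hx : TotallyBounded (range fun n ↦ U^[n] x)) {ε : ℝ} (hε : 0 < ε) :
    ∃ᶠ n in atTop, dist (U^[s n] x) x < ε := by
  simpa only [displacement_natCast] using
    hs _ (isPrecompactSeminorm_displacement hU hx) ε hε

end Isometry

/-- Total ergodicity, stated through positive powers only, since `T` need not be invertible. -/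
def IsTotallyErgodic {X : Type*} [MeasurableSpace X] (T : X → X) (μ : Measure X) : Prop :=
  ∀ n ≠ 0, Ergodic T^[n] μ

theorem IsTotallyErgodic.measurePreserving {X : Type*} [MeasurableSpace X] {T : X → X}
    {μ : Measure X} (hT : IsTotallyErgodic T μ) : MeasurePreserving T μ μ :=
  (hT 1 one_ne_zero).toMeasurePreserving

/-- The correlations of `T` along `s` are asymptotically at most `K` times those of independent
events. Preimages rather than images are used, since `T` need not be invertible. -/
def IsDominatedAlong {X : Type*} [MeasurableSpace X] (T : X → X) (μ : Measure X) (s : ℕ → ℕ)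
    (K : ℝ≥0) : Prop :=
  ∀ A B, MeasurableSet A → MeasurableSet B →
    limsup (fun n ↦ μ (A ∩ T^[s n] ⁻¹' B)) atTop ≤ K * (μ A * μ B)

theorem iterate_apply_iterate {X M : Type*} {T : X → X} {U : M → M} {Φ : X → M}
    (hΦT : ∀ x, U (Φ (T x)) = Φ x) (n : ℕ) (x : X) : U^[n] (Φ (T^[n] x)) = Φ x := by
  induction n generalizing x with
  | zero => rfl
  | succ n ih => rw [Function.iterate_succ_apply', Function.iterate_succ_apply, ih, hΦT]

theorem preimage_iterate_preimage_ball {X M : Type*} [PseudoMetricSpace M] {T : X → X} {U : M → M}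
    {Φ : X → M} (hU : Isometry U) (hΦT : ∀ x, U (Φ (T x)) = Φ x) (n : ℕ) (c : M) (ε : ℝ) :
    T^[n] ⁻¹' (Φ ⁻¹' Metric.ball c ε) = Φ ⁻¹' Metric.ball (U^[n] c) ε := by
  ext x
  simp only [mem_preimage, Metric.mem_ball, ← iterate_apply_iterate hΦT n x,
    (isometry_iterate hU n).dist_eq]

section IsometricFactor

variable {X M : Type*} [MeasurableSpace X] {μ : Measure X} [IsProbabilityMeasure μ] {T : X → X}
  {s : ℕ → ℕ} {K : ℝ≥0}

section Pseudo

variable [PseudoMetricSpace M] {U : M → M} {Φ : X → M}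

theorem totallyBounded_range_iterate (hT : MeasurePreserving T μ μ) (hU : Isometry U)
    (hΦ : StronglyMeasurable Φ) (hΦT : ∀ x, U (Φ (T x)) = Φ x) {c : M}
    (hc : ∀ ε > 0, μ (Φ ⁻¹' Metric.ball c ε) ≠ 0) : TotallyBounded (range fun n ↦ U^[n] c) := by
  borelize M
  have : IsProbabilityMeasure (μ.map Φ) := Measure.isProbabilityMeasure_map hΦ.aemeasurable
  refine totallyBounded_of_forall_le_measure_ball (μ.map Φ) fun ε hε ↦
    ⟨_, pos_iff_ne_zero.2 (hc ε hε), ?_⟩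
  rintro _ ⟨n, rfl⟩
  rw [Measure.map_apply hΦ.measurable Metric.isOpen_ball.measurableSet,
    ← preimage_iterate_preimage_ball hU hΦT,
    (hT.iterate n).measure_preimage
      (hΦ.measurable Metric.isOpen_ball.measurableSet).nullMeasurableSet]

theorem one_le_mul_measure_preimage_ball (hT : MeasurePreserving T μ μ) (hs : IsBohrRecurrent s)
    (hK : IsDominatedAlong T μ s K) (hU : Isometry U)
    (hΦ : StronglyMeasurable Φ) (hΦT : ∀ x, U (Φ (T x)) = Φ x) {c : M}
    (hc : ∀ ε > 0, μ (Φ ⁻¹' Metric.ball c ε) ≠ 0) {ε : ℝ} (hε : 0 < ε) :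
    1 ≤ K * μ (Φ ⁻¹' Metric.ball c ε) := by
  borelize M
  have measurable_ball (r : ℝ) : MeasurableSet (Φ ⁻¹' Metric.ball c r) :=
    hΦ.measurable Metric.isOpen_ball.measurableSet
  set B := Φ ⁻¹' Metric.ball c (ε / 2)
  have returns : ∃ᶠ n in atTop, μ B ≤ μ (B ∩ T^[s n] ⁻¹' (Φ ⁻¹' Metric.ball c ε)) := by
    refine (hs.frequently_dist_iterate_lt hU
      (totallyBounded_range_iterate hT hU hΦ hΦT hc) (half_pos hε)).mono fun n hn ↦ ?_
    rw [preimage_iterate_preimage_ball hU hΦT, ← preimage_inter]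
    refine measure_mono (preimage_mono (subset_inter Subset.rfl (Metric.ball_subset_ball' ?_)))
    rw [dist_comm]
    linarith
  have : 1 * μ B ≤ K * μ (Φ ⁻¹' Metric.ball c ε) * μ B := calc
    1 * μ B ≤ limsup (fun n ↦ μ (B ∩ T^[s n] ⁻¹' (Φ ⁻¹' Metric.ball c ε))) atTop := by
      rw [one_mul]
      exact le_limsup_of_frequently_le returns
    _ ≤ K * (μ B * μ (Φ ⁻¹' Metric.ball c ε)) := hK _ _ (measurable_ball _) (measurable_ball _)
    _ = K * μ (Φ ⁻¹' Metric.ball c ε) * μ B := by ring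
  exact (ENNReal.mul_le_mul_iff_left (hc _ (half_pos hε)) (measure_ne_top _ _)).1 this

end Pseudo

variable [MetricSpace M] {U : M → M} {Φ : X → M}

theorem ae_eq_of_measure_preimage_singleton_ne_zero (hT : IsTotallyErgodic T μ) (hU : Isometry U)
    (hΦ : StronglyMeasurable Φ) (hΦT : ∀ x, U (Φ (T x)) = Φ x) {c : M}
    (hc : μ (Φ ⁻¹' {c}) ≠ 0) : ∀ᵐ x ∂μ, Φ x = c := by
  borelize M
  have measurable_fiber : MeasurableSet (Φ ⁻¹' {c}) := hΦ.measurable (measurableSet_singleton c)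
  obtain ⟨x, hx, m, hm, hmx⟩ := hT.measurePreserving.exists_mem_iterate_mem
    measurable_fiber.nullMeasurableSet hc
  have periodic : U^[m] c = c := by
    have := iterate_apply_iterate hΦT m x
    rwa [mem_singleton_iff.1 hx, mem_singleton_iff.1 hmx] at this
  have invariant : T^[m] ⁻¹' (Φ ⁻¹' {c}) = Φ ⁻¹' {c} := by
    ext y
    simp only [mem_preimage, mem_singleton_iff]
    rw [← iterate_apply_iterate hΦT m y, ← (isometry_iterate hU m).injective.eq_iff, periodic]
  exact ((hT m hm).measure_self_or_compl_eq_zero measurable_fiber invariant).resolve_left hc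

theorem exists_ae_eq_const_of_isometric_factor (hT : IsTotallyErgodic T μ)
    (hs : IsBohrRecurrent s) (hK : IsDominatedAlong T μ s K) (hU : Isometry U)
    (hΦ : StronglyMeasurable Φ) (hΦT : ∀ x, U (Φ (T x)) = Φ x) : ∃ c, ∀ᵐ x ∂μ, Φ x = c := by
  borelize M
  obtain ⟨c, hc⟩ := exists_forall_measure_preimage_ball_ne_zero (μ := μ) hΦ
  have fiber : ⋂ r > 0, Φ ⁻¹' Metric.ball c r = Φ ⁻¹' {c} := by
    rw [← preimage_iInter₂, Metric.biInter_gt_ball, Metric.closedBall_zero]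
  have tendsto_fiber : Tendsto (fun r ↦ μ (Φ ⁻¹' Metric.ball c r)) (𝓝[>] 0) (𝓝 (μ (Φ ⁻¹' {c}))) :=
    fiber ▸ tendsto_measure_biInter_gt
      (fun _ _ ↦ (hΦ.measurable Metric.isOpen_ball.measurableSet).nullMeasurableSet)
      (fun _ _ _ hrs ↦ preimage_mono (Metric.ball_subset_ball hrs))
      ⟨1, one_pos, measure_ne_top _ _⟩
  have atom : 1 ≤ K * μ (Φ ⁻¹' {c}) :=
    ge_of_tendsto (ENNReal.Tendsto.const_mul tendsto_fiber (.inr ENNReal.coe_ne_top)) <|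
      eventually_mem_nhdsWithin.mono fun _ hr ↦
        one_le_mul_measure_preimage_ball hT.measurePreserving hs hK hU hΦ hΦT hc hr
  refine ⟨c, ae_eq_of_measure_preimage_singleton_ne_zero hT hU hΦ hΦT fun h ↦ ?_⟩
  simp [h] at atom

end IsometricFactor

section Sections

variable {X Y E : Type*} [MeasurableSpace X] [MeasurableSpace Y] [NormedAddCommGroup E]
  (ν : Measure Y) [IsFiniteMeasure ν] {p : ℝ≥0∞}

theorem indicatorConstLp_biUnion {ι : Type*} (c : E) {f : ι → Set Y} (hf : ∀ i, MeasurableSet (f i))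
    (hd : Pairwise (Function.onFun Disjoint f)) (t : Finset ι) :
    indicatorConstLp p (t.measurableSet_biUnion fun i _ ↦ hf i) (measure_ne_top ν _) c =
      ∑ i ∈ t, indicatorConstLp p (hf i) (measure_ne_top ν _) c := by
  classical
  induction t using Finset.induction_on with
  | empty => simp only [Finset.notMem_empty, iUnion_of_empty, iUnion_empty, indicatorConstLp_empty,
      Finset.sum_empty]
  | insert i t hi ih =>
    rw [Finset.sum_insert hi, ← ih, ← indicatorConstLp_disjoint_union]
    · simp only [Finset.set_biUnion_insert]
    · exact disjoint_iUnion₂_right.2 fun j hj ↦ hd (ne_of_mem_of_not_mem hj hi).symm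

theorem hasSum_indicatorConstLp_iUnion {ι : Type*} [Countable ι] [Fact (1 ≤ p)] (hp : p ≠ ∞) (c : E)
    {f : ι → Set Y} (hf : ∀ i, MeasurableSet (f i)) (hd : Pairwise (Function.onFun Disjoint f)) :
    HasSum (fun i ↦ indicatorConstLp p (hf i) (measure_ne_top ν _) c)
      (indicatorConstLp p (.iUnion hf) (measure_ne_top ν _) c) := by
  simp only [HasSum, SummationFilter.unconditional_filter, ← indicatorConstLp_biUnion ν c hf hd]
  refine tendsto_indicatorConstLp_set hp ?_
  have measure_symmDiff (t : Finset ι) :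
      ν (symmDiff (⋃ i ∈ t, f i) (⋃ i, f i)) = ν (⋃ i, f i) - ν (⋃ i ∈ t, f i) := by
    have subset : ⋃ i ∈ t, f i ⊆ ⋃ i, f i := iUnion₂_subset fun i _ ↦ subset_iUnion f i
    rw [symmDiff_of_le subset, measure_sdiff subset
      (t.measurableSet_biUnion fun i _ ↦ hf i).nullMeasurableSet (measure_ne_top _ _)]
  have exhaust : Tendsto (fun t : Finset ι ↦ ν (⋃ i ∈ t, f i)) atTop (𝓝 (ν (⋃ i, f i))) := by
    rw [iUnion_eq_iUnion_finset]
    exact tendsto_measure_iUnion_atTop fun t u htu ↦ biUnion_mono htu fun _ _ ↦ Subset.rfl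
  simpa only [measure_symmDiff, tsub_self] using
    ENNReal.Tendsto.sub tendsto_const_nhds exhaust (.inl (measure_ne_top ν (⋃ i, f i)))

theorem stronglyMeasurable_indicatorConstLp_prodMk_left [Fact (1 ≤ p)] (hp : p ≠ ∞) (c : E)
    {s : Set (X × Y)} (hs : MeasurableSet s) :
    StronglyMeasurable fun x ↦
      indicatorConstLp p (measurable_prodMk_left (x := x) hs) (measure_ne_top ν _) c := by
  induction s, hs using MeasurableSpace.induction_on_inter generateFrom_prod.symm isPiSystem_prod
  case empty =>
    simp only [preimage_empty, indicatorConstLp_empty]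
    exact stronglyMeasurable_const
  case basic s hs =>
    classical
    obtain ⟨A, hA, B, hB, rfl⟩ := hs
    have rectangle : StronglyMeasurable
        fun x ↦ if x ∈ A then indicatorConstLp p hB (measure_ne_top ν B) c else 0 :=
      .ite hA stronglyMeasurable_const stronglyMeasurable_const
    convert rectangle using 2 with x
    split_ifs with hx
    · simp only [mk_preimage_prod_right hx]
    · simp only [mk_preimage_prod_right_eq_empty hx, indicatorConstLp_empty]
  case compl s hs ih =>
    convert (stronglyMeasurable_const (b := Lp.const p ν c)).sub ih using 1
    ext1 x
    rw [Pi.sub_apply, eq_sub_iff_add_eq, ← indicatorConstLp_univ, ← indicatorConstLp_disjoint_union]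
    · simp only [← preimage_union, compl_union_self, preimage_univ]
    · exact disjoint_compl_left.preimage _
  case iUnion f hd hf ih =>
    refine stronglyMeasurable_of_tendsto atTop
      (fun t ↦ Finset.stronglyMeasurable_sum t fun n _ ↦ ih n) (tendsto_pi_nhds.2 fun x ↦ ?_)
    simpa only [Finset.sum_apply, preimage_iUnion] using! hasSum_indicatorConstLp_iUnion ν hp c
      (fun n ↦ measurable_prodMk_left (x := x) (hf n)) fun i j hij ↦ (hd hij).preimage _

end Sections

theorem eventuallyConst_ae_prod_of_ae_prodMk_left {X Y : Type*} [MeasurableSpace X]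
    [MeasurableSpace Y] {μ : Measure X} {ν : Measure Y} [SFinite ν] {s : Set (X × Y)}
    (hs : MeasurableSet s) {t : Set Y} (ht : EventuallyConst t (ae ν))
    (hst : ∀ᵐ x ∂μ, Prod.mk x ⁻¹' s =ᵐ[ν] t) : EventuallyConst s (ae (μ.prod ν)) := by
  rw [eventuallyConst_set'] at ht ⊢
  refine ht.imp (fun h ↦ ?_) fun h ↦ ?_
  · rw [ae_eq_empty, Measure.measure_prod_null hs]
    exact hst.mono fun x hx ↦ ae_eq_empty.1 (hx.trans h)
  · rw [ae_eq_univ, Measure.measure_prod_null hs.compl]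
    exact hst.mono fun x hx ↦ ae_eq_univ.1 (hx.trans h)

theorem IsTotallyErgodic.ergodic_prodMap_self {X : Type*} [MeasurableSpace X] {T : X → X}
    {μ : Measure X} [IsProbabilityMeasure μ] {s : ℕ → ℕ} {K : ℝ≥0} (hT : IsTotallyErgodic T μ)
    (hs : IsBohrRecurrent s) (hK : IsDominatedAlong T μ s K) :
    Ergodic (Prod.map T T) (μ.prod μ) := by
  have hTμ := hT.measurePreserving
  refine ⟨hTμ.prod hTμ, ⟨fun E hE invariant ↦ ?_⟩⟩
  let Φ (x : X) : Lp ℝ 1 μ :=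
    indicatorConstLp 1 (measurable_prodMk_left (x := x) hE) (measure_ne_top μ _) 1
  have section_eq_preimage (x : X) : T ⁻¹' (Prod.mk (T x) ⁻¹' E) = Prod.mk x ⁻¹' E :=
    congrArg (Prod.mk x ⁻¹' ·) invariant
  have hΦT (x : X) : Lp.compMeasurePreserving T hTμ (Φ (T x)) = Φ x := by
    simp only [Φ, Lp.indicatorConstLp_compMeasurePreserving, section_eq_preimage]
  obtain ⟨c, hc⟩ := exists_ae_eq_const_of_isometric_factor hT hs hK
    (Lp.isometry_compMeasurePreserving hTμ)
    (stronglyMeasurable_indicatorConstLp_prodMk_left μ ENNReal.one_ne_top 1 hE) hΦT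
  have section_ae_eq {x y : X} (hx : Φ x = c) (hy : Φ y = c) :
      Prod.mk x ⁻¹' E =ᵐ[μ] Prod.mk y ⁻¹' E :=
    (indicatorConstLp_inj _ _ _ _ one_ne_zero).1 (hx.trans hy.symm)
  obtain ⟨x, hx, hTx⟩ := (hc.and (hTμ.quasiMeasurePreserving.ae hc)).exists
  have section_invariant : T ⁻¹' (Prod.mk x ⁻¹' E) =ᵐ[μ] Prod.mk x ⁻¹' E := by
    have := hTμ.quasiMeasurePreserving.preimage_ae_eq (section_ae_eq hx hTx)
    rwa [section_eq_preimage] at this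
  refine eventuallyConst_ae_prod_of_ae_prodMk_left hE (eventuallyConst_set'.2 ?_)
    (hc.mono fun y hy ↦ section_ae_eq hy hx)
  exact (hT 1 one_ne_zero).quasiErgodic.ae_empty_or_univ₀
    (measurable_prodMk_left hE).nullMeasurableSet section_invariant

section Birkhoff

variable {Ω : Type*} [MeasurableSpace Ω] {ν : Measure Ω} {f : Ω → Ω}

theorem integrable_birkhoffAverage {E : Type*} [NormedAddCommGroup E] [NormedSpace ℝ E]
    (hf : MeasurePreserving f ν ν) {g : Ω → E} (hg : Integrable g ν) (N : ℕ) :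
    Integrable (birkhoffAverage ℝ f g N) ν :=
  .smul _ (integrable_finsetSum _ fun j _ ↦ (hf.iterate j).integrable_comp_of_integrable hg)

theorem integral_birkhoffAverage {E : Type*} [NormedAddCommGroup E] [NormedSpace ℝ E]
    (hf : MeasurePreserving f ν ν) {g : Ω → E} (hg : Integrable g ν) {N : ℕ} (hN : N ≠ 0) :
    ∫ ω, birkhoffAverage ℝ f g N ω ∂ν = ∫ ω, g ω ∂ν := by
  have integrable_iterate (j : ℕ) : Integrable (fun ω ↦ g (f^[j] ω)) ν :=
    (hf.iterate j).integrable_comp_of_integrable hg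
  have integral_iterate (j : ℕ) : ∫ ω, g (f^[j] ω) ∂ν = ∫ ω, g ω ∂ν := by
    have hj := hf.iterate j
    rw [← integral_map hj.aemeasurable (hj.map_eq.symm ▸ hg.aestronglyMeasurable), hj.map_eq]
  simp only [birkhoffAverage, birkhoffSum, integral_smul]
  rw [integral_finsetSum (Finset.range N) fun j _ ↦ integrable_iterate j]
  simp only [integral_iterate, Finset.sum_const, Finset.card_range]
  rw [← Nat.cast_smul_eq_nsmul ℝ, inv_smul_smul₀ (Nat.cast_ne_zero.2 hN)]

theorem enorm_integral_sub_le_lintegral_enorm_birkhoffAverage_sub [IsProbabilityMeasure ν]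
    {E : Type*} [NormedAddCommGroup E] [NormedSpace ℝ E] [CompleteSpace E]
    (hf : MeasurePreserving f ν ν) {g : Ω → E} (hg : Integrable g ν) {N : ℕ} (hN : N ≠ 0) (c : E) :
    ‖∫ ω, g ω ∂ν - c‖ₑ ≤ ∫⁻ ω, ‖birkhoffAverage ℝ f g N ω - c‖ₑ ∂ν := by
  have integral_sub_const : ∫ ω, (birkhoffAverage ℝ f g N ω - c) ∂ν = ∫ ω, g ω ∂ν - c := by
    rw [integral_sub (integrable_birkhoffAverage hf hg N) (integrable_const c),
      integral_birkhoffAverage hf hg hN, integral_const, probReal_univ, one_smul]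
  exact integral_sub_const ▸ enorm_integral_le_lintegral_enorm _

theorem coeFn_birkhoffAverage_compMeasurePreserving {E : Type*} [NormedAddCommGroup E]
    [NormedSpace ℝ E] {p : ℝ≥0∞} (hf : MeasurePreserving f ν ν) (g : Lp E p ν) (N : ℕ) :
    (birkhoffAverage ℝ (Lp.compMeasurePreserving f hf) id N g : Lp E p ν) =ᵐ[ν]
      birkhoffAverage ℝ f g N := by
  have iterate (j : ℕ) : ((Lp.compMeasurePreserving f hf)^[j] g : Lp E p ν) =ᵐ[ν] g ∘ f^[j] := by
    rw [Lp.compMeasurePreserving_iterate]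
    exact Lp.coeFn_compMeasurePreserving g _
  filter_upwards [Lp.coeFn_smul (N : ℝ)⁻¹ (birkhoffSum (Lp.compMeasurePreserving f hf) id N g),
    Lp.coeFn_finsetSum (Finset.range N) fun j ↦ (Lp.compMeasurePreserving f hf)^[j] g,
    ae_all_iff.2 iterate] with ω smul sum iterate
  simp only [birkhoffSum, id] at smul
  simp only [birkhoffAverage, birkhoffSum, id, smul, Pi.smul_apply, sum, Finset.sum_apply, iterate,
    Function.comp_apply]

theorem eq_const_integral_of_compMeasurePreserving_eq [IsProbabilityMeasure ν] {E : Type*}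
    [NormedAddCommGroup E] [NormedSpace ℝ E] [CompleteSpace E] {p : ℝ≥0∞} (hf : Ergodic f ν)
    {g : Lp E p ν} (hg : Lp.compMeasurePreserving f hf.toMeasurePreserving g = g) :
    g = Lp.const p ν (∫ ω, g ω ∂ν) := by
  have invariant : g ∘ f =ᵐ[ν] g := by
    simpa only [hg] using (Lp.coeFn_compMeasurePreserving g hf.toMeasurePreserving).symm
  obtain ⟨c, hc⟩ := hf.ae_eq_const_of_ae_eq_comp_ae (Lp.aestronglyMeasurable g) invariant
  have integral_eq : ∫ ω, g ω ∂ν = c := by simp [integral_congr_ae hc]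
  exact Lp.ext (hc.trans (integral_eq ▸ (Lp.coeFn_const p ν c).symm))

theorem tendsto_birkhoffAverage_compMeasurePreserving [IsProbabilityMeasure ν] (hf : Ergodic f ν)
    (g : Lp ℝ 2 ν) :
    Tendsto (birkhoffAverage ℝ (Lp.compMeasurePreserving f hf.toMeasurePreserving) id · g) atTop
      (𝓝 (Lp.const 2 ν (∫ ω, g ω ∂ν))) := by
  let U := (Lp.compMeasurePreservingₗᵢ ℝ (E := ℝ) (p := 2) f
    hf.toMeasurePreserving).toContinuousLinearMap
  set fixed := (U : Lp ℝ 2 ν →ₗ[ℝ] Lp ℝ 2 ν).eqLocus (1 : Lp ℝ 2 ν →L[ℝ] Lp ℝ 2 ν)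
  have one_mem_fixed : indicatorConstLp 2 .univ (measure_ne_top ν univ) (1 : ℝ) ∈ fixed :=
    Lp.indicatorConstLp_compMeasurePreserving .univ (measure_ne_top ν univ) 1 hf.toMeasurePreserving
  have integral_projection :
      ∫ ω, (fixed.orthogonalProjectionOnto g : Lp ℝ 2 ν) ω ∂ν = ∫ ω, g ω ∂ν := by
    simpa only [Submodule.coe_inner, L2.inner_indicatorConstLp_one, setIntegral_univ] using
      fixed.inner_orthogonalProjectionOnto_eq_of_mem_left ⟨_, one_mem_fixed⟩ g
  rw [← integral_projection, ← eq_const_integral_of_compMeasurePreserving_eq hf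
    (fixed.orthogonalProjectionOnto g).2]
  exact U.tendsto_birkhoffAverage_orthogonalProjection
    (LinearIsometry.norm_toContinuousLinearMap_le _) g

theorem tendsto_lintegral_enorm_birkhoffAverage_sub [IsProbabilityMeasure ν] (hf : Ergodic f ν)
    {g : Ω → ℝ} (hg : MemLp g 2 ν) :
    Tendsto (fun N ↦ ∫⁻ ω, ‖birkhoffAverage ℝ f g N ω - ∫ x, g x ∂ν‖ₑ ∂ν) atTop (𝓝 0) := by
  have convergence := tendsto_iff_edist_tendsto_0.1
    (tendsto_birkhoffAverage_compMeasurePreserving hf (hg.toLp g))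
  refine tendsto_of_tendsto_of_tendsto_of_le_of_le tendsto_const_nhds convergence
    (fun _ ↦ zero_le) fun N ↦ ?_
  have coeFn := (coeFn_birkhoffAverage_compMeasurePreserving hf.toMeasurePreserving
    (hg.toLp g) N).trans
      (hf.quasiMeasurePreserving.birkhoffAverage_ae_eq_of_ae_eq ℝ hg.coeFn_toLp N)
  have coeFn_sub : ⇑(birkhoffAverage ℝ (Lp.compMeasurePreserving f hf.toMeasurePreserving) id N
      (hg.toLp g)) - ⇑(Lp.const 2 ν (∫ x, hg.toLp g x ∂ν)) =ᵐ[ν]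
      fun ω ↦ birkhoffAverage ℝ f g N ω - ∫ x, g x ∂ν := by
    rw [← integral_congr_ae hg.coeFn_toLp]
    exact coeFn.sub (Lp.coeFn_const 2 ν _)
  rw [Lp.edist_def, eLpNorm_congr_ae coeFn_sub, ← eLpNorm_one_eq_lintegral_enorm]
  exact eLpNorm_le_eLpNorm_of_exponent_le one_le_two
    ((aestronglyMeasurable_congr coeFn_sub).1
      ((Lp.aestronglyMeasurable _).sub (Lp.aestronglyMeasurable _)))

end Birkhoff

theorem ennreal_limsup_add_le {ι : Type*} {l : Filter ι} (u v : ι → ℝ≥0∞) :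
    limsup (fun i ↦ u i + v i) l ≤ limsup u l + limsup v l := by
  refine ENNReal.le_of_forall_pos_le_add fun ε hε hfin ↦ ?_
  have hε' : (ε : ℝ≥0∞) / 2 ≠ 0 := by simpa using hε.ne'
  have eventually_u := eventually_lt_of_limsup_lt
    (ENNReal.lt_add_right (le_self_add.trans_lt hfin).ne hε')
  have eventually_v := eventually_lt_of_limsup_lt
    (ENNReal.lt_add_right (le_add_self.trans_lt hfin).ne hε')
  refine limsup_le_of_le (h := ?_)
  filter_upwards [eventually_u, eventually_v] with i hu hv
  calc u i + v i ≤ (limsup u l + ε / 2) + (limsup v l + ε / 2) := add_le_add hu.le hv.le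
    _ = limsup u l + limsup v l + ε := by rw [add_add_add_comm, ENNReal.add_halves]

theorem ennreal_limsup_sum_le {ι α : Type*} {l : Filter ι} (t : Finset α) (u : α → ι → ℝ≥0∞) :
    limsup (fun i ↦ ∑ a ∈ t, u a i) l ≤ ∑ a ∈ t, limsup (u a) l := by
  classical
  induction t using Finset.induction_on with
  | empty =>
    simp only [Finset.sum_empty]
    exact limsup_le_of_le (h := .of_forall fun _ ↦ le_rfl)
  | insert a t ha ih =>
    simp only [Finset.sum_insert ha]
    exact (ennreal_limsup_add_le _ _).trans (by gcongr)

theorem limsup_lintegral_comp_le {ι Ω γ : Type*} [MeasurableSpace Ω] [Finite γ]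
    [MeasurableSpace γ] [MeasurableSingletonClass γ] {l : Filter ι} {ρ : ι → Measure Ω}
    {ν : Measure Ω} {K : ℝ≥0∞} {π : Ω → γ} (hπ : Measurable π) {F : γ → ℝ≥0∞}
    (hF : ∀ c, F c ≠ ∞) (hK : ∀ c, limsup (fun i ↦ ρ i (π ⁻¹' {c})) l ≤ K * ν (π ⁻¹' {c})) :
    limsup (fun i ↦ ∫⁻ ω, F (π ω) ∂ρ i) l ≤ K * ∫⁻ ω, F (π ω) ∂ν := by
  have := Fintype.ofFinite γ
  have lintegral_eq_sum (κ : Measure Ω) : ∫⁻ ω, F (π ω) ∂κ = ∑ c, F c * κ (π ⁻¹' {c}) := by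
    rw [← lintegral_map (measurable_of_finite F) hπ, lintegral_fintype]
    simp only [Measure.map_apply hπ (measurableSet_singleton _)]
  simp only [lintegral_eq_sum]
  calc limsup (fun i ↦ ∑ c, F c * ρ i (π ⁻¹' {c})) l
      ≤ ∑ c, limsup (fun i ↦ F c * ρ i (π ⁻¹' {c})) l := ennreal_limsup_sum_le _ _
    _ = ∑ c, F c * limsup (fun i ↦ ρ i (π ⁻¹' {c})) l := by
      simp only [ENNReal.limsup_const_mul_of_ne_top (hF _)]
    _ ≤ ∑ c, F c * (K * ν (π ⁻¹' {c})) := by gcongr with c; exact hK c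
    _ = K * ∑ c, F c * ν (π ⁻¹' {c}) := by simp only [Finset.mul_sum, mul_left_comm]

section Joining

variable {X Y : Type*} {T : X → X} {S : Y → Y}

/-- The record of which of the first `N` points of the orbit of `x` lie in `A`; its level sets
are the atoms of the partition generated by `A, T⁻¹A, …, T⁻⁽ᴺ⁻¹⁾A`. -/
def itinerary (T : X → X) (A : Set X) (N : ℕ) (x : X) : Fin N → Prop :=
  fun j ↦ T^[j] x ∈ A

theorem measurable_itinerary [MeasurableSpace X] (hT : Measurable T) {A : Set X}
    (hA : MeasurableSet A) (N : ℕ) : Measurable (itinerary T A N) :=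
  measurable_pi_iff.2 fun j ↦ measurableSet_setOfPred.1 (hT.iterate j hA)

theorem exists_birkhoffAverage_indicator_prod_eq (A : Set X) (B : Set Y) (N : ℕ) :
    ∃ F : (Fin N → Prop) × (Fin N → Prop) → ℝ, ∀ ω : X × Y,
      birkhoffAverage ℝ (Prod.map T S) ((A ×ˢ B).indicator 1) N ω =
        F (itinerary T A N ω.1, itinerary S B N ω.2) := by
  classical
  refine ⟨fun c ↦ (N : ℝ)⁻¹ • ∑ j, if c.1 j ∧ c.2 j then 1 else 0, fun ω ↦ ?_⟩
  simp only [birkhoffAverage, birkhoffSum, Finset.sum_range, itinerary, Prod.map_iterate,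
    indicator_apply, mem_prod, Prod.map_fst, Prod.map_snd, Pi.one_apply]
  congr!

variable [MeasurableSpace X] [MeasurableSpace Y] {ι : Type*} {l : Filter ι}
  {ν : Measure (X × Y)} {ρ : ι → Measure (X × Y)} {K : ℝ≥0∞}

theorem limsup_lintegral_enorm_birkhoffAverage_sub_le (hT : Measurable T) (hS : Measurable S)
    (hK : ∀ A B, MeasurableSet A → MeasurableSet B →
      limsup (fun i ↦ ρ i (A ×ˢ B)) l ≤ K * ν (A ×ˢ B))
    {A : Set X} {B : Set Y} (hA : MeasurableSet A) (hB : MeasurableSet B) (N : ℕ) (c : ℝ) :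
    limsup (fun i ↦ ∫⁻ ω,
        ‖birkhoffAverage ℝ (Prod.map T S) ((A ×ˢ B).indicator 1) N ω - c‖ₑ ∂ρ i) l ≤
      K * ∫⁻ ω, ‖birkhoffAverage ℝ (Prod.map T S) ((A ×ˢ B).indicator 1) N ω - c‖ₑ ∂ν := by
  obtain ⟨F, hF⟩ := exists_birkhoffAverage_indicator_prod_eq (T := T) (S := S) A B N
  simp only [hF]
  have measurable_code := (measurable_itinerary hT hA N).prodMap (measurable_itinerary hS hB N)
  refine limsup_lintegral_comp_le (F := fun q ↦ ‖F q - c‖ₑ) measurable_code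
    (fun _ ↦ enorm_ne_top) fun q ↦ ?_
  have atom_eq_prod : Prod.map (itinerary T A N) (itinerary S B N) ⁻¹' {q} =
      (itinerary T A N ⁻¹' {q.1}) ×ˢ (itinerary S B N ⁻¹' {q.2}) := by
    rw [← preimage_prod_map_prod, singleton_prod_singleton]
  rw [atom_eq_prod]
  exact hK _ _ (measurable_itinerary hT hA N (measurableSet_singleton _))
    (measurable_itinerary hS hB N (measurableSet_singleton _))

theorem tendsto_measure_prod_of_limsup_le [IsProbabilityMeasure ν]
    [∀ i, IsProbabilityMeasure (ρ i)] (hT : Measurable T) (hS : Measurable S)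
    (hν : Ergodic (Prod.map T S) ν) (hρ : ∀ i, MeasurePreserving (Prod.map T S) (ρ i) (ρ i))
    (hK_top : K ≠ ∞) (hK : ∀ A B, MeasurableSet A → MeasurableSet B →
      limsup (fun i ↦ ρ i (A ×ˢ B)) l ≤ K * ν (A ×ˢ B))
    {A : Set X} {B : Set Y} (hA : MeasurableSet A) (hB : MeasurableSet B) :
    Tendsto (fun i ↦ ρ i (A ×ˢ B)) l (𝓝 (ν (A ×ˢ B))) := by
  have hAB : MeasurableSet (A ×ˢ B) := hA.prod hB
  let deviation (N : ℕ) (ω : X × Y) : ℝ≥0∞ :=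
    ‖birkhoffAverage ℝ (Prod.map T S) ((A ×ˢ B).indicator 1) N ω - ν.real (A ×ˢ B)‖ₑ
  have deviation_tendsto : Tendsto (fun N ↦ K * ∫⁻ ω, deviation N ω ∂ν) atTop (𝓝 0) := by
    have memLp_indicator : MemLp ((A ×ˢ B).indicator (1 : X × Y → ℝ)) 2 ν :=
      memLp_indicator_const 2 hAB 1 (.inr (measure_ne_top _ _))
    have := ENNReal.Tendsto.const_mul
      (tendsto_lintegral_enorm_birkhoffAverage_sub hν memLp_indicator) (.inr hK_top)
    rwa [mul_zero, integral_indicator_one hAB] at this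
  rw [← ENNReal.tendsto_toReal_iff (fun i ↦ measure_ne_top _ _) (measure_ne_top _ _),
    EMetric.tendsto_nhds]
  intro ε hε
  obtain ⟨N, hN, N_ne_zero⟩ :=
    ((deviation_tendsto.eventually_lt_const hε).and (eventually_ne_atTop 0)).exists
  have limsup_lt : limsup (fun i ↦ ∫⁻ ω, deviation N ω ∂ρ i) l < ε :=
    (limsup_lintegral_enorm_birkhoffAverage_sub_le hT hS hK hA hB N _).trans_lt hN
  filter_upwards [eventually_lt_of_limsup_lt limsup_lt] with i hi
  calc edist (ρ i (A ×ˢ B)).toReal (ν (A ×ˢ B)).toReal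
      = ‖∫ ω, (A ×ˢ B).indicator 1 ω ∂ρ i - ν.real (A ×ˢ B)‖ₑ := by
        rw [integral_indicator_one hAB, edist_eq_enorm_sub, measureReal_def, measureReal_def]
    _ ≤ ∫⁻ ω, deviation N ω ∂ρ i :=
        enorm_integral_sub_le_lintegral_enorm_birkhoffAverage_sub (hρ i)
          ((integrable_const 1).indicator hAB) N_ne_zero _
    _ < ε := hi

end Joining

theorem mixing_along_powers_of_totallyErgodic_of_limsup_le_general {X : Type*} [MeasurableSpace X]
    {μ : Measure X} [IsProbabilityMeasure μ] {T : X → X} {s : ℕ → ℕ} {K : ℝ≥0}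
    (hT : IsTotallyErgodic T μ) (hs : IsBohrRecurrent s) (hK : IsDominatedAlong T μ s K)
    {A B : Set X} (hA : MeasurableSet A) (hB : MeasurableSet B) :
    Tendsto (fun n ↦ μ (A ∩ T^[s n] ⁻¹' B)) atTop (𝓝 (μ A * μ B)) := by
  have hTμ := hT.measurePreserving
  have measurable_graph (n : ℕ) : Measurable fun x ↦ (x, T^[s n] x) :=
    measurable_id.prodMk (hTμ.measurable.iterate _)
  let graphJoining (n : ℕ) : Measure (X × X) := μ.map fun x ↦ (x, T^[s n] x)
  have (n : ℕ) : IsProbabilityMeasure (graphJoining n) :=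
    Measure.isProbabilityMeasure_map (measurable_graph n).aemeasurable
  have graphJoining_prod (n : ℕ) {C D : Set X} (hC : MeasurableSet C) (hD : MeasurableSet D) :
      graphJoining n (C ×ˢ D) = μ (C ∩ T^[s n] ⁻¹' D) :=
    Measure.map_apply (measurable_graph n) (hC.prod hD)
  have graphJoining_invariant (n : ℕ) :
      MeasurePreserving (Prod.map T T) (graphJoining n) (graphJoining n) := by
    have graph_semiconj : Function.Semiconj (fun x ↦ (x, T^[s n] x)) T (Prod.map T T) := fun x ↦
      Prod.ext rfl (Function.Commute.iterate_self T (s n) x)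
    exact (measurable_graph n).measurePreserving μ |>.of_semiconj hTμ graph_semiconj
      (hTμ.measurable.prodMap hTμ.measurable)
  have graphJoining_tendsto := tendsto_measure_prod_of_limsup_le hTμ.measurable hTμ.measurable
    (hT.ergodic_prodMap_self hs hK) graphJoining_invariant ENNReal.coe_ne_top
    (fun C D hC hD ↦ by
      simpa only [graphJoining_prod _ hC hD, Measure.prod_prod] using hK C D hC hD) hA hB
  simpa only [graphJoining_prod _ hA hB, Measure.prod_prod] using graphJoining_tendsto

theorem measure_image_inter_of_measurePreserving {X Y : Type*} [MeasurableSpace X]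
    [MeasurableSpace Y] {μ : Measure X} {ν : Measure Y} {f : X → Y} (hf : MeasurePreserving f μ ν)
    (hfe : MeasurableEmbedding f) (A : Set X) (B : Set Y) : ν (f '' A ∩ B) = μ (A ∩ f ⁻¹' B) := by
  rw [← image_inter_preimage, ← hf.measure_preimage_emb hfe, preimage_image_eq _ hfe.injective]

theorem measurableEmbedding_iterate {X : Type*} [MeasurableSpace X] {f : X → X}
    (hf : MeasurableEmbedding f) (n : ℕ) : MeasurableEmbedding f^[n] := by
  induction n with
  | zero => exact .id
  | succ n ih => exact ih.comp hf

/-- if `T` is a totally ergodic invertible measure-preserving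
transformation of a standard probability space and
`limsup μ(T^{n^k} A ∩ B) ≤ K μ(A)μ(B)` for some constant `K > 1`, then `T` is mixing
along the sequence `(n^k)`. -/
theorem mixing_along_powers_of_totallyErgodic_of_limsup_le
    (k : ℕ) (hk : 1 ≤ k)
    {X : Type*} [MeasurableSpace X] [StandardBorelSpace X]
    (μ : Measure X) [IsProbabilityMeasure μ] (T : X ≃ᵐ X)
    (hT : MeasurePreserving T μ μ)
    (herg : ∀ n : ℕ, n ≠ 0 → Ergodic ((⇑T)^[n]) μ ∧ Ergodic ((⇑T.symm)^[n]) μ)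
    (K : ℝ) (hK : 1 < K)
    (hbound : ∀ A B : Set X, MeasurableSet A → MeasurableSet B →
      Filter.limsup (fun n : ℕ => μ ((⇑T)^[n ^ k] '' A ∩ B)) atTop ≤
        ENNReal.ofReal K * (μ A * μ B)) :
    ∀ A B : Set X, MeasurableSet A → MeasurableSet B →
      Tendsto (fun n : ℕ => μ ((⇑T)^[n ^ k] '' A ∩ B)) atTop (nhds (μ A * μ B)) := by
  have image_inter (n : ℕ) (A B : Set X) : μ ((⇑T)^[n] '' A ∩ B) = μ (A ∩ (⇑T)^[n] ⁻¹' B) :=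
    measure_image_inter_of_measurePreserving (hT.iterate n)
      (measurableEmbedding_iterate T.measurableEmbedding n) A B
  simp only [image_inter] at hbound ⊢
  exact fun A B ↦ mixing_along_powers_of_totallyErgodic_of_limsup_le_general
    (fun n hn ↦ (herg n hn).1) (isBohrRecurrent_pow (Nat.one_le_iff_ne_zero.1 hk)) hbound
end
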